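/- Let D be a division ring, let A be an ultramatricial D-ring, and let N be an extremal pseudo-rank function on A such that the completion Q of A with respect to N is a continuous factor. Then Q is isomorphic to M_D as a D-ring. -/

import Mathlib

open scoped TensorProduct Kronecker

noncomputable section

namespace AraClaramunt

/-! ### Pseudo-rank functions and rank metric notions -/

/-- A pseudo-rank function on a unital ring. -/
structure IsPseudoRankFunction {R : Type*} [Ring R] (N : R → ℝ) : Prop where
  nonneg : ∀ x : R, 0 ≤ N x
  le_one : ∀ x : R, N x ≤ 1
  map_one : N 1 = 1
  subadditive : ∀ a b : R, N (a + b) ≤ N a + N b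
  mul_le_left : ∀ a b : R, N (a * b) ≤ N a
  mul_le_right : ∀ a b : R, N (a * b) ≤ N b
  add_of_orthogonal : ∀ e f : R, IsIdempotentElem e → IsIdempotentElem f →
    e * f = 0 → f * e = 0 → N (e + f) = N e + N f

/-- A rank function is a faithful pseudo-rank function. -/
def IsRankFunction {R : Type*} [Ring R] (N : R → ℝ) : Prop :=
  IsPseudoRankFunction N ∧ ∀ x : R, N x = 0 → x = 0

/-- Cauchy sequence for the pseudo-metric `d(x,y) = N (x - y)`. -/
def RankCauchy {R : Type*} [Ring R] (N : R → ℝ) (u : ℕ → R) : Prop :=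
  ∀ ε : ℝ, 0 < ε → ∃ n₀ : ℕ, ∀ m n : ℕ, n₀ ≤ m → n₀ ≤ n → N (u m - u n) < ε

/-- Convergence for the pseudo-metric `d(x,y) = N (x - y)`. -/
def RankTendsto {R : Type*} [Ring R] (N : R → ℝ) (u : ℕ → R) (x : R) : Prop :=
  ∀ ε : ℝ, 0 < ε → ∃ n₀ : ℕ, ∀ n : ℕ, n₀ ≤ n → N (u n - x) < ε

/-- Completeness with respect to the pseudo-metric `d(x,y) = N (x - y)`. -/
def RankComplete {R : Type*} [Ring R] (N : R → ℝ) : Prop :=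
  ∀ u : ℕ → R, RankCauchy N u → ∃ x : R, RankTendsto N u x

/-- Density of a subset with respect to the pseudo-metric `d(x,y) = N (x - y)`. -/
def RankDense {R : Type*} [Ring R] (N : R → ℝ) (S : Set R) : Prop :=
  ∀ x : R, ∀ ε : ℝ, 0 < ε → ∃ y ∈ S, N (x - y) < ε

/-- von Neumann regularity. -/
def VNRegular (R : Type*) [Ring R] : Prop :=
  ∀ x : R, ∃ y : R, x = x * y * x

/-- A continuous factor: a simple, von Neumann regular, right and left self-injective ring
admitting a rank function whose image is all of `[0,1]`. -/
def IsContinuousFactor (R : Type*) [Ring R] : Prop :=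
  IsSimpleRing R ∧ VNRegular R ∧ Module.Injective R R ∧ Module.Injective Rᵐᵒᵖ Rᵐᵒᵖ ∧
    ∃ N : R → ℝ, IsRankFunction N ∧ Set.range N = Set.Icc (0 : ℝ) 1

/-- An extremal pseudo-rank function: an extreme point of the convex set of all
pseudo-rank functions. -/
def IsExtremalPseudoRankFunction {R : Type*} [Ring R] (N : R → ℝ) : Prop :=
  N ∈ Set.extremePoints ℝ {S : R → ℝ | IsPseudoRankFunction S}

/-! ### Matricial and ultramatricial algebras -/

/-- A matricial `K`-algebra. -/
def IsMatricialAlgebra (K : Type*) [Field K] (A : Type*) [Ring A] [Algebra K A] : Prop :=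
  ∃ (k : ℕ) (n : Fin (k + 1) → ℕ), (∀ i, 0 < n i) ∧
    Nonempty (A ≃ₐ[K] ((i : Fin (k + 1)) → Matrix (Fin (n i)) (Fin (n i)) K))

/-- An ultramatricial `K`-algebra: the increasing union of matricial subalgebras. -/
def IsUltramatricialAlgebra (K : Type*) [Field K] (B : Type*) [Ring B] [Algebra K B] : Prop :=
  ∃ C : ℕ → Subalgebra K B, (∀ n, C n ≤ C (n + 1)) ∧
    (∀ n, IsMatricialAlgebra K (C n)) ∧ (∀ b : B, ∃ n, b ∈ C n)

/-- `Q`, with rank function `N`, is the rank-metric completion of a direct limit of the matrix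
algebras `M_{p n}(K)`: it is complete and carries a dense increasing tower of unital subalgebras
isomorphic to `M_{p n}(K)`. -/
def IsMatrixTowerCompletion (K : Type*) [Field K] (Q : Type*) [Ring Q] [Algebra K Q]
    (N : Q → ℝ) (p : ℕ → ℕ) : Prop :=
  IsRankFunction N ∧ RankComplete N ∧
    ∃ A : ℕ → Subalgebra K Q, (∀ n, A n ≤ A (n + 1)) ∧
      (∀ n, Nonempty ((A n) ≃ₐ[K] Matrix (Fin (p n)) (Fin (p n)) K)) ∧
      RankDense N (⋃ n, (A n : Set Q))

/-- `Q` is (a copy of) von Neumann's continuous factor `M_K`, the completion of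
`lim_n M_{2^n}(K)` with respect to its unique rank function. -/
def IsMK (K : Type*) [Field K] (Q : Type*) [Ring Q] [Algebra K Q] (N : Q → ℝ) : Prop :=
  IsMatrixTowerCompletion K Q N (fun n => 2 ^ n)

/-- The canonical block-diagonal unital embedding `M_a(K) → M_b(K)`, `z ↦ z ⊗ 1_g`,
where `b = a * g`. -/
def blockEmbedFun (K : Type*) [Semiring K] {a : ℕ} (g b : ℕ) (h : a * g = b)
    (z : Matrix (Fin a) (Fin a) K) : Matrix (Fin b) (Fin b) K :=
  Matrix.reindex (finProdFinEquiv.trans (finCongr h)) (finProdFinEquiv.trans (finCongr h))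
    (z ⊗ₖ (1 : Matrix (Fin g) (Fin g) K))

end AraClaramunt
namespace AraClaramunt

/-- A matricial `D`-ring: a `D`-ring isomorphic, compatibly with the structure maps, to a finite
product of matrix rings over `D` (with the canonical diagonal `D`-ring structure). -/
def IsMatricialDRing (D : Type) [DivisionRing D] (A : Type) [Ring A] (ι : D →+* A) : Prop :=
  ∃ (k : ℕ) (n : Fin (k + 1) → ℕ), (∀ i, 0 < n i) ∧
    ∃ e : A ≃+* ((i : Fin (k + 1)) → Matrix (Fin (n i)) (Fin (n i)) D),
      ∀ d : D, e (ι d) = fun i => d • (1 : Matrix (Fin (n i)) (Fin (n i)) D)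

/-- An ultramatricial `D`-ring: an increasing union of matricial `D`-subrings. -/
def IsUltramatricialDRing (D : Type) [DivisionRing D] (A : Type) [Ring A]
    (ι : D →+* A) : Prop :=
  ∃ C : ℕ → Subring A, (∀ n, C n ≤ C (n + 1)) ∧ (∀ a : A, ∃ n, a ∈ C n) ∧
    ∀ n, ∃ h : ∀ d : D, ι d ∈ C n,
      IsMatricialDRing D (C n) (RingHom.codRestrict ι (C n) h)

/-- `Q`, as a `D`-ring via `ι` and with rank function `N`, is (a copy of) `M_D`, the completion
of `lim_n M_{2^n}(D)` with respect to its unique rank function. -/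
def IsMD (D : Type) [DivisionRing D] (Q : Type) [Ring Q] (ι : D →+* Q)
    (N : Q → ℝ) : Prop :=
  IsRankFunction N ∧ RankComplete N ∧
    ∃ C : ℕ → Subring Q, (∀ n, C n ≤ C (n + 1)) ∧ RankDense N (⋃ n, (C n : Set Q)) ∧
      ∀ n, ∃ h : ∀ d : D, ι d ∈ C n,
        ∃ e : (C n) ≃+* Matrix (Fin (2 ^ n)) (Fin (2 ^ n)) D,
          ∀ d : D, e (RingHom.codRestrict ι (C n) h d)
            = d • (1 : Matrix (Fin (2 ^ n)) (Fin (2 ^ n)) D)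


set_option linter.unusedSectionVars false

/-! ### Basic facts on pseudo-rank functions -/

namespace IsPseudoRankFunction

section
variable {R : Type*} [Ring R] {N : R → ℝ}

lemma map_zero (hN : IsPseudoRankFunction N) : N 0 = 0 := by
  have h := hN.add_of_orthogonal 0 0 (by simp [IsIdempotentElem]) (by simp [IsIdempotentElem])
    (by simp) (by simp)
  simp at h
  exact h

lemma map_neg (hN : IsPseudoRankFunction N) (x : R) : N (-x) = N x := by
  apply le_antisymm
  · have := hN.mul_le_right (-1) x
    simpa using this
  · have := hN.mul_le_right (-1) (-x)
    simpa using this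

lemma sub_le (hN : IsPseudoRankFunction N) (x y : R) : N (x - y) ≤ N x + N y := by
  have := hN.subadditive x (-y)
  rw [hN.map_neg] at this
  simpa [sub_eq_add_neg] using this

lemma sub_comm (hN : IsPseudoRankFunction N) (x y : R) : N (x - y) = N (y - x) := by
  rw [← hN.map_neg, neg_sub]

lemma tri (hN : IsPseudoRankFunction N) (x y z : R) : N (x - z) ≤ N (x - y) + N (y - z) := by
  have := hN.subadditive (x - y) (y - z)
  simpa using this

lemma le_add_sub (hN : IsPseudoRankFunction N) (x y : R) : N x ≤ N y + N (x - y) := by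
  have := hN.subadditive y (x - y)
  simpa using this

lemma abs_sub_le (hN : IsPseudoRankFunction N) (x y : R) : |N x - N y| ≤ N (x - y) := by
  rw [abs_le]
  have h1 := hN.le_add_sub x y
  have h2 := hN.le_add_sub y x
  rw [hN.sub_comm y x] at h2
  constructor <;> linarith

lemma sum_le (hN : IsPseudoRankFunction N) {I : Type*} (s : Finset I) (f : I → R) :
    N (∑ i ∈ s, f i) ≤ ∑ i ∈ s, N (f i) := by
  classical
  induction s using Finset.induction_on with
  | empty => simp [hN.map_zero]
  | insert a s ha ih =>
    rw [Finset.sum_insert ha, Finset.sum_insert ha]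
    exact (hN.subadditive _ _).trans (by linarith)

lemma sandwich_le (hN : IsPseudoRankFunction N) (u x v : R) : N (u * x * v) ≤ N x :=
  (hN.mul_le_left _ _).trans (hN.mul_le_right _ _)

/-- rank of `x*y` and `y*x = g` agree when `x = x g`, `y = g y`. -/
lemma eqv (hN : IsPseudoRankFunction N) {x y g : R} (h1 : y * x = g) (h2 : x * g = x) :
    N (x * y) = N g := by
  apply le_antisymm
  · rw [← h2]
    rw [mul_assoc]
    exact (hN.mul_le_right _ _).trans (hN.mul_le_left _ _)
  · have h3 : g = y * (x * y) * x := by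
      calc g = y * x := h1.symm
        _ = y * (x * g) := by rw [h2]
        _ = y * (x * y) * x := by rw [← h1]; simp only [mul_assoc]
    calc N g = N (y * (x * y) * x) := by rw [← h3]
      _ ≤ _ := hN.sandwich_le _ _ _

lemma sub_of_le (hN : IsPseudoRankFunction N) {e h : R} (he : e * e = e) (hh : h * h = h)
    (h1 : e * h = h) (h2 : h * e = h) : N (e - h) = N e - N h := by
  have := hN.add_of_orthogonal (e - h) h
    (by unfold IsIdempotentElem; simp [sub_mul, mul_sub, he, hh, h1, h2]) hh
    (by simp [sub_mul, hh, h1]) (by simp [mul_sub, hh, h2])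
  simp at this
  linarith

lemma one_sub (hN : IsPseudoRankFunction N) {h : R} (hh : h * h = h) : N (1 - h) = 1 - N h := by
  rw [hN.sub_of_le (by simp) hh (by simp) (by simp), hN.map_one]

end
end IsPseudoRankFunction

section orth
variable {R : Type*} [Ring R] {N : R → ℝ}

lemma orth_sum_mul {I : Type*} [DecidableEq I] (s : Finset I) (f : I → R)
    (hf : ∀ i j, f i * f j = if i = j then f i else 0) :
    (∑ i ∈ s, f i) * (∑ i ∈ s, f i) = ∑ i ∈ s, f i := by
  rw [Finset.sum_mul]
  apply Finset.sum_congr rfl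
  intro i hi
  rw [Finset.mul_sum]
  simp [hf, hi]

lemma orth_sum_rank (hN : IsPseudoRankFunction N) {I : Type*} [DecidableEq I] (s : Finset I)
    (f : I → R) (hf : ∀ i j, f i * f j = if i = j then f i else 0) :
    N (∑ i ∈ s, f i) = ∑ i ∈ s, N (f i) := by
  induction s using Finset.induction_on with
  | empty => simp [hN.map_zero]
  | insert a s ha ih =>
    rw [Finset.sum_insert ha, Finset.sum_insert ha, hN.add_of_orthogonal, ih]
    · simp [IsIdempotentElem, hf]
    · exact orth_sum_mul s f hf
    · rw [Finset.mul_sum]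
      apply Finset.sum_eq_zero
      intro i hi
      rw [hf, if_neg]
      rintro rfl
      exact ha hi
    · rw [Finset.sum_mul]
      apply Finset.sum_eq_zero
      intro i hi
      rw [hf, if_neg]
      rintro rfl
      exact ha hi

/-- A family of columns and rows `X, Y` with `Y i * X j = δ g`. -/
structure XYSys {I : Type*} [DecidableEq I] (g : R) (X Y : I → R) : Prop where
  yx : ∀ i j, Y i * X j = if i = j then g else 0
  xg : ∀ i, X i * g = X i
  gy : ∀ i, g * Y i = Y i

namespace XYSys
variable {I : Type*} [DecidableEq I] {g : R} {X Y : I → R}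

lemma mul_mul (h : XYSys g X Y) (i j k l : I) :
    (X i * Y j) * (X k * Y l) = if j = k then X i * Y l else 0 := by
  have : (X i * Y j) * (X k * Y l) = X i * (Y j * X k) * Y l := by simp only [mul_assoc]
  rw [this, h.yx]
  split_ifs with hh
  · rw [h.xg]
  · simp

lemma orth (h : XYSys g X Y) (i j : I) :
    (X i * Y i) * (X j * Y j) = if i = j then X i * Y i else 0 := by
  rw [h.mul_mul]
  split_ifs with hh
  · rw [hh]
  · rfl

lemma rank (h : XYSys g X Y) (hN : IsPseudoRankFunction N) (i : I) : N (X i * Y i) = N g :=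
  hN.eqv (by rw [h.yx]; simp) (h.xg i)

lemma rank_le (h : XYSys g X Y) (hN : IsPseudoRankFunction N) (i j : I) :
    N (X i * Y j) ≤ N g := by
  rw [← h.xg, mul_assoc]
  exact (hN.mul_le_right _ _).trans (hN.mul_le_left _ _)

lemma rank_sum (h : XYSys g X Y) (hN : IsPseudoRankFunction N) (s : Finset I) :
    N (∑ i ∈ s, X i * Y i) = s.card * N g := by
  rw [orth_sum_rank hN s _ h.orth]
  simp [h.rank hN]

lemma idem (h : XYSys g X Y) (s : Finset I) :
    (∑ i ∈ s, X i * Y i) * (∑ i ∈ s, X i * Y i) = ∑ i ∈ s, X i * Y i :=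
  orth_sum_mul s _ h.orth

lemma sum_mul_x [Fintype I] (h : XYSys g X Y) (j : I) : (∑ i, X i * Y i) * X j = X j := by
  rw [Finset.sum_mul]
  simp [mul_assoc, h.yx, h.xg]

lemma y_mul_sum [Fintype I] (h : XYSys g X Y) (j : I) : Y j * (∑ i, X i * Y i) = Y j := by
  rw [Finset.mul_sum]
  simp [← mul_assoc, h.yx, h.gy]

lemma map {S : Type*} [Ring S] (f : R →+* S) (h : XYSys g X Y) :
    XYSys (f g) (fun i => f (X i)) (fun i => f (Y i)) := by
  refine ⟨fun i j => ?_, fun i => ?_, fun i => ?_⟩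
  · rw [← _root_.map_mul, h.yx]; split_ifs <;> simp
  · rw [← _root_.map_mul, h.xg]
  · rw [← _root_.map_mul, h.gy]

/-- Glue a system with another one in the complement. -/
lemma sum [Fintype I] {I' : Type*} [DecidableEq I'] {X' Y' : I' → R}
    (h : XYSys g X Y) (h' : XYSys g X' Y')
    (hx : ∀ i, (1 - ∑ i, X i * Y i) * X' i = X' i) (hy : ∀ i, Y' i * (1 - ∑ i, X i * Y i) = Y' i) :
    XYSys g (Sum.elim X X') (Sum.elim Y Y') := by
  refine ⟨?_, ?_, ?_⟩
  · rintro (i | i) (j | j)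
    · simp [h.yx]
    · simp only [Sum.elim_inl, Sum.elim_inr, reduceCtorEq, if_false]
      rw [← hx, ← mul_assoc, mul_sub, h.y_mul_sum]
      simp
    · simp only [Sum.elim_inl, Sum.elim_inr, reduceCtorEq, if_false]
      rw [← hy, mul_assoc, sub_mul, h.sum_mul_x]
      simp
    · simp [h'.yx]
  · rintro (i | i)
    · simp [h.xg]
    · simp [h'.xg]
  · rintro (i | i)
    · simp [h.gy]
    · simp [h'.gy]

lemma reindex {I' : Type*} [DecidableEq I'] (h : XYSys g X Y) (f : I' → I)
    (hf : Function.Injective f) : XYSys g (fun i => X (f i)) (fun i => Y (f i)) := by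
  refine ⟨fun i j => ?_, fun i => h.xg _, fun i => h.gy _⟩
  rw [h.yx]
  simp [hf.eq_iff]

end XYSys
end orth

/-! ### Products of matrix algebras over a field -/

section linalg
variable {K : Type*} [Field K]

lemma idem_factor {n : ℕ} (e : Matrix (Fin n) (Fin n) K) (he : e * e = e) (r : ℕ)
    (hre : e.rank = r) :
    ∃ (U : Matrix (Fin n) (Fin r) K) (V : Matrix (Fin r) (Fin n) K),
      U * V = e ∧ V * U = 1 := by
  classical
  set f := Matrix.toLin' e with hf
  have hff : ∀ v, f (f v) = f v := by
    intro v
    rw [← LinearMap.comp_apply, hf, ← Matrix.toLin'_mul, he]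
  have hr : Module.finrank K (LinearMap.range f) = r := hre
  let b := Module.finBasisOfFinrankEq K (LinearMap.range f) hr
  let E := b.equivFun
  refine ⟨LinearMap.toMatrix' ((LinearMap.range f).subtype ∘ₗ E.symm.toLinearMap),
    LinearMap.toMatrix' (E.toLinearMap ∘ₗ f.rangeRestrict), ?_, ?_⟩
  · rw [← LinearMap.toMatrix'_comp]
    have : ((LinearMap.range f).subtype ∘ₗ E.symm.toLinearMap) ∘ₗ (E.toLinearMap ∘ₗ f.rangeRestrict)
        = f := by
      ext v
      simp
    rw [this, hf, LinearMap.toMatrix'_toLin']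
  · rw [← LinearMap.toMatrix'_comp]
    have : (E.toLinearMap ∘ₗ f.rangeRestrict) ∘ₗ ((LinearMap.range f).subtype ∘ₗ E.symm.toLinearMap)
        = LinearMap.id := by
      apply LinearMap.ext
      intro v
      have : f.rangeRestrict ((E.symm v : LinearMap.range f) : Fin n → K) = E.symm v := by
        obtain ⟨w, hw⟩ := (E.symm v).2
        apply Subtype.ext
        rw [← hw]
        simpa using hff w
      simp [this]
    rw [this, LinearMap.toMatrix'_id]

lemma mrank_add_le {m n : ℕ} (a b : Matrix (Fin m) (Fin n) K) :
    (a + b).rank ≤ a.rank + b.rank := by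
  unfold Matrix.rank
  rw [Matrix.mulVecLin_add]
  refine le_trans (Submodule.finrank_mono (LinearMap.range_add_le _ _)) ?_
  exact Submodule.finrank_add_le_finrank_add_finrank _ _

lemma mrank_sum_le {m n : ℕ} {I : Type*} (s : Finset I) (a : I → Matrix (Fin m) (Fin n) K) :
    (∑ i ∈ s, a i).rank ≤ ∑ i ∈ s, (a i).rank := by
  classical
  induction s using Finset.induction_on with
  | empty => simp
  | insert a s ha ih =>
    rw [Finset.sum_insert ha, Finset.sum_insert ha]
    exact (mrank_add_le _ _).trans (by omega)

/-- comparison in a single matrix algebra -/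
lemma compare_one {n : ℕ} {L : Type*} [Fintype L] [DecidableEq L]
    (g e : Matrix (Fin n) (Fin n) K) (hg : g * g = g) (he : e * e = e)
    (hle : Fintype.card L * g.rank ≤ e.rank) :
    ∃ X Y : L → Matrix (Fin n) (Fin n) K, XYSys g X Y ∧ (∀ i, e * X i = X i) ∧
      (∀ i, Y i * e = Y i) := by
  obtain ⟨r, hr⟩ : ∃ r, e.rank = r := ⟨_, rfl⟩
  obtain ⟨s, hs⟩ : ∃ s, g.rank = s := ⟨_, rfl⟩
  rw [hr, hs] at hle
  obtain ⟨U, V, hUV, hVU⟩ := idem_factor e he r hr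
  obtain ⟨U', V', hUV', hVU'⟩ := idem_factor g hg s hs
  have hcard : Fintype.card (L × Fin s) ≤ Fintype.card (Fin r) := by
    simpa using hle
  obtain ⟨c⟩ := Function.Embedding.nonempty_of_card_le hcard
  let J : L → Matrix (Fin r) (Fin s) K :=
    fun l => Matrix.of fun p q => if p = c (l, q) then 1 else 0
  have hJ : ∀ l l', (J l).transpose * J l' = if l = l' then 1 else 0 := by
    intro l l'
    ext p q
    simp only [Matrix.mul_apply, Matrix.transpose_apply, J, Matrix.of_apply]
    simp only [mul_ite, mul_one, mul_zero, Finset.sum_ite_eq', Finset.mem_univ, if_true]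
    by_cases hl : l = l'
    · subst hl
      simp [Matrix.one_apply, eq_comm]
    · simp only [if_neg hl]
      rw [if_neg]
      · rfl
      · intro h
        exact hl (Prod.ext_iff.mp (c.injective h)).1.symm
  refine ⟨fun l => U * J l * V', fun l => U' * (J l).transpose * V, ⟨?_, ?_, ?_⟩, ?_, ?_⟩
  · intro l l'
    have : U' * (J l).transpose * V * (U * J l' * V')
        = U' * ((J l).transpose * ((V * U) * J l')) * V' := by
      simp only [Matrix.mul_assoc]
    rw [this, hVU, Matrix.one_mul, hJ]
    split_ifs
    · simp [hUV']
    · simp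
  · intro l
    have : U * J l * V' * g = U * J l * ((V' * U') * V') := by
      rw [← hUV']; simp only [Matrix.mul_assoc]
    rw [this, hVU', Matrix.one_mul]
  · intro l
    have : g * (U' * (J l).transpose * V) = (U' * (V' * U')) * (J l).transpose * V := by
      rw [← hUV']; simp only [Matrix.mul_assoc]
    rw [this, hVU', Matrix.mul_one]
  · intro l
    have : e * (U * J l * V') = (U * (V * U)) * J l * V' := by
      conv_lhs => rw [← hUV]
      simp only [Matrix.mul_assoc]
    rw [this, hVU, Matrix.mul_one]
  · intro l
    have : U' * (J l).transpose * V * e = U' * (J l).transpose * ((V * U) * V) := by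
      conv_lhs => rw [← hUV]
      simp only [Matrix.mul_assoc]
    rw [this, hVU, Matrix.one_mul]

end linalg

/-- A finite product of matrix rings. -/
abbrev TT (J : Type) (n : J → ℕ) (R : Type) : Type := ∀ j : J, Matrix (Fin (n j)) (Fin (n j)) R

/-- The entrywise image of a ring homomorphism on a product of matrix rings. -/
def TTmap {J : Type} {n : J → ℕ} {R S : Type} [Ring R] [Ring S] (f : R →+* S) :
    TT J n R →+* TT J n S :=
  RingHom.pi fun j => (RingHom.mapMatrix f).comp (Pi.evalRingHom _ j)

lemma TTmap_apply {J : Type} {n : J → ℕ} {R S : Type} [Ring R] [Ring S] (f : R →+* S)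
    (x : TT J n R) (j : J) : TTmap f x j = (x j).map f := rfl

/-- A matrix unit with coefficient. -/
def cell {J : Type} [DecidableEq J] {n : J → ℕ} {R : Type} [Ring R] (j : J) (p q : Fin (n j))
    (d : R) : TT J n R := Pi.single j (Matrix.single p q d)

/-- Sum of block identities. -/
def zset {J : Type} [DecidableEq J] {n : J → ℕ} {R : Type} [Ring R] (S : Finset J) : TT J n R :=
  fun j => if j ∈ S then 1 else 0

/-- Scalars. -/
def scal {J : Type} {n : J → ℕ} {R : Type} [Ring R] (d : R) : TT J n R :=
  fun j => d • (1 : Matrix (Fin (n j)) (Fin (n j)) R)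

section TTK
variable {K : Type} [Field K] {J : Type} [Fintype J] [DecidableEq J] {n : J → ℕ}

lemma TT_compare {L : Type} [Fintype L] [DecidableEq L] (g e : TT J n K) (hg : g * g = g)
    (he : e * e = e) (hle : ∀ j, Fintype.card L * (g j).rank ≤ (e j).rank) :
    ∃ X Y : L → TT J n K, XYSys g X Y ∧ (∀ i, e * X i = X i) ∧ (∀ i, Y i * e = Y i) := by
  have h : ∀ j, _ := fun j => compare_one (L := L) (g j) (e j) (congrFun hg j) (congrFun he j) (hle j)
  choose X Y h1 h2 h3 using h
  refine ⟨fun l j => X j l, fun l j => Y j l, ⟨?_, ?_, ?_⟩, ?_, ?_⟩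
  · intro i i'
    funext j
    have := (h1 j).yx i i'
    rw [Pi.mul_apply, this]
    split_ifs <;> rfl
  · intro i; funext j; exact (h1 j).xg i
  · intro i; funext j; exact (h1 j).gy i
  · intro i; funext j; exact h2 j i
  · intro i; funext j; exact h3 j i

lemma TT_exists_idem (w : J → ℕ) (hw : ∀ j, w j ≤ n j) :
    ∃ g : TT J n K, g * g = g ∧ ∀ j, (g j).rank = w j := by
  classical
  refine ⟨fun j => Matrix.diagonal fun p => if (p : ℕ) < w j then 1 else 0, ?_, ?_⟩
  · funext j
    simp
  · intro j
    rw [Matrix.rank_diagonal]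
    have : Fintype.card {i : Fin (n j) // (if (i : ℕ) < w j then (1 : K) else 0) ≠ 0}
        = Fintype.card (Fin (w j)) := by
      apply Fintype.card_congr
      refine ⟨fun i => ⟨i.1, by have := i.2; simpa using this⟩,
        fun i => ⟨⟨i, lt_of_lt_of_le i.2 (hw j)⟩, by simp⟩, fun i => rfl, fun i => rfl⟩
    simpa using this

/-- rank of the complement of a system. -/
lemma TT_rank_compl {L : Type} [Fintype L] [DecidableEq L] {g : TT J n K} {X Y : L → TT J n K}
    (h : XYSys g X Y) (j : J) :
    n j ≤ ((1 - ∑ l, X l * Y l : TT J n K) j).rank + Fintype.card L * (g j).rank := by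
  have h1 : (1 : Matrix (Fin (n j)) (Fin (n j)) K)
      = (1 - ∑ l, X l * Y l : TT J n K) j + ∑ l, (X l j * Y l j) := by
    simp
  have h2 : (1 : Matrix (Fin (n j)) (Fin (n j)) K).rank = n j := by simp
  calc n j = (1 : Matrix (Fin (n j)) (Fin (n j)) K).rank := h2.symm
    _ = ((1 - ∑ l, X l * Y l : TT J n K) j + ∑ l, (X l j * Y l j)).rank := by rw [← h1]
    _ ≤ _ := mrank_add_le _ _
    _ ≤ _ := by
      gcongr
      refine (mrank_sum_le _ _).trans ?_
      calc ∑ l, (X l j * Y l j).rank ≤ ∑ l : L, (g j).rank := by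
            apply Finset.sum_le_sum
            intro l _
            have : X l j = X l j * g j := (congrFun (h.xg l) j).symm
            rw [this]
            exact (Matrix.rank_mul_le_left _ _).trans (Matrix.rank_mul_le_right _ _)
        _ = _ := by simp

lemma TT_decomp (hn : ∀ j, 0 < n j) (e : TT J n K) (he : e * e = e) (r : J → ℕ)
    (hr : ∀ j, (e j).rank = r j) :
    ∃ x y : (Σ j, Fin (r j)) → TT J n K,
      (∀ p q, y p * x q = if p = q then cell p.1 ⟨0, hn _⟩ ⟨0, hn _⟩ 1 else 0) ∧
      (∀ p, x p * cell p.1 ⟨0, hn _⟩ ⟨0, hn _⟩ 1 = x p) ∧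
      (∀ p, cell p.1 ⟨0, hn _⟩ ⟨0, hn _⟩ 1 * y p = y p) ∧
      (∑ p, x p * y p = e) ∧
      ∀ (D : Type) [Ring D] (ρ : K →+* D) (_ : ∀ k d, ρ k * d = d * ρ k) (a : TT J n D),
        ∃ δ : ∀ j, Fin (r j) → Fin (r j) → D,
          TTmap ρ e * a * TTmap ρ e =
            ∑ j, ∑ p, ∑ q, scal (δ j p q) * TTmap ρ (x ⟨j, p⟩ * y ⟨j, q⟩) := by
  have h : ∀ j, _ := fun j => idem_factor (e j) (congrFun he j) (r j) (hr j)
  choose U V hUV hVU using h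
  refine ⟨fun p => Pi.single p.1 (U p.1 * Matrix.single p.2 (⟨0, hn _⟩ : Fin (n p.1)) (1 : K)),
    fun p => Pi.single p.1 (Matrix.single (⟨0, hn _⟩ : Fin (n p.1)) p.2 (1 : K) * V p.1), ?_, ?_, ?_, ?_, ?_⟩
  · rintro ⟨i, a⟩ ⟨j, b⟩
    by_cases hij : i = j
    · subst hij
      simp only [← Pi.single_mul]
      have : Matrix.single (⟨0, hn i⟩ : Fin (n i)) a (1 : K) * V i * (U i * Matrix.single b (⟨0, hn i⟩ : Fin (n i)) (1 : K))
        = Matrix.single (⟨0, hn i⟩ : Fin (n i)) a (1 : K) * (V i * U i) * Matrix.single b (⟨0, hn i⟩ : Fin (n i)) (1 : K) := by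
        simp only [Matrix.mul_assoc]
      rw [this, hVU, Matrix.mul_one]
      by_cases hab : a = b
      · subst hab
        simp [cell]
      · have hne : (⟨i, a⟩ : Σ j, Fin (r j)) ≠ ⟨i, b⟩ := by
          intro h; apply hab; simpa using h
        rw [if_neg hne, Matrix.single_mul_single_of_ne _ _ _ _ hab]
        simp
    · have hne : (⟨i, a⟩ : Σ j, Fin (r j)) ≠ ⟨j, b⟩ := by
        intro h; apply hij; exact congrArg Sigma.fst h
      rw [if_neg hne]
      funext l
      by_cases hl : l = i
      · subst hl
        simp [Pi.single_eq_of_ne hij]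
      · simp [Pi.single_eq_of_ne hl]
  · rintro ⟨i, a⟩
    simp only [cell, ← Pi.single_mul, Matrix.mul_assoc, Matrix.single_mul_single_same, mul_one]
  · rintro ⟨i, a⟩
    simp only [cell, ← Pi.single_mul, ← Matrix.mul_assoc, Matrix.single_mul_single_same, mul_one]
  · rw [Fintype.sum_sigma]
    funext l
    rw [Finset.sum_apply, Finset.sum_eq_single l]
    · simp only [← Pi.single_mul]
      rw [Finset.sum_apply]
      simp only [Pi.single_eq_same]
      have : ∀ a : Fin (r l), U l * Matrix.single a (⟨0, hn l⟩ : Fin (n l)) (1 : K) * (Matrix.single (⟨0, hn l⟩ : Fin (n l)) a (1 : K) * V l)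
          = U l * Matrix.single a a (1 : K) * V l := by
        intro a
        have : U l * Matrix.single a (⟨0, hn l⟩ : Fin (n l)) (1 : K) * (Matrix.single (⟨0, hn l⟩ : Fin (n l)) a (1 : K) * V l)
          = U l * (Matrix.single a (⟨0, hn l⟩ : Fin (n l)) (1 : K) * Matrix.single (⟨0, hn l⟩ : Fin (n l)) a (1 : K)) * V l := by
          simp only [Matrix.mul_assoc]
        rw [this, Matrix.single_mul_single_same, mul_one]
      simp only [this]
      rw [← Matrix.sum_mul, ← Matrix.mul_sum, Matrix.sum_single_one, Matrix.mul_one, hUV]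
    · intro j _ hj
      rw [Finset.sum_apply]
      apply Finset.sum_eq_zero
      intro a _
      simp [Pi.single_eq_of_ne (Ne.symm hj)]
    · simp
  · intro D _ ρ hρ a
    refine ⟨fun j p q => ((V j).map ρ * a j * (U j).map ρ) p q, ?_⟩
    funext l
    rw [Finset.sum_apply, Finset.sum_eq_single l]
    · have key : ∀ p q : Fin (r l), (Pi.single l (U l * Matrix.single p (⟨0, hn l⟩ : Fin (n l)) (1 : K)) *
          Pi.single l (Matrix.single (⟨0, hn l⟩ : Fin (n l)) q (1 : K) * V l) : TT J n K) l
          = U l * Matrix.single p q (1 : K) * V l := by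
        intro p q
        rw [← Pi.single_mul, Pi.single_eq_same]
        have : U l * Matrix.single p (⟨0, hn l⟩ : Fin (n l)) (1 : K) * (Matrix.single (⟨0, hn l⟩ : Fin (n l)) q (1 : K) * V l)
          = U l * (Matrix.single p (⟨0, hn l⟩ : Fin (n l)) (1 : K) * Matrix.single (⟨0, hn l⟩ : Fin (n l)) q (1 : K)) * V l := by
          simp only [Matrix.mul_assoc]
        rw [this, Matrix.single_mul_single_same, mul_one]
      simp only [Finset.sum_apply, Pi.mul_apply, TTmap_apply]
      simp only [Pi.mul_apply] at key
      simp only [key]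
      have h1 : (e l).map ρ = (U l).map ρ * (V l).map ρ := by
        rw [← Matrix.map_mul, hUV]
      generalize hW : (V l).map ρ * a l * (U l).map ρ = W
      have h2 : (e l).map ρ * a l * (e l).map ρ = (U l).map ρ * W * (V l).map ρ := by
        rw [h1, ← hW]; simp only [Matrix.mul_assoc]
      rw [h2]
      conv_lhs => rw [Matrix.matrix_eq_sum_single W]
      rw [Matrix.mul_sum, Matrix.sum_mul]
      apply Finset.sum_congr rfl
      intro p _
      rw [Matrix.mul_sum, Matrix.sum_mul]
      apply Finset.sum_congr rfl
      intro q _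
      rw [Matrix.map_mul, Matrix.map_mul]
      simp only [scal, smul_mul_assoc, Matrix.one_mul]
      have h3 : (Matrix.single p q (1 : K)).map ρ = Matrix.single p q (1 : D) := by
        ext s t
        simp only [Matrix.map_apply, Matrix.single_apply]
        split_ifs <;> simp
      have h4 : (U l).map ρ * Matrix.single p q (W p q)
          = W p q • ((U l).map ρ * Matrix.single p q (1 : D)) := by
        ext s t
        simp only [Matrix.mul_apply, Matrix.smul_apply, Matrix.map_apply, Matrix.single_apply,
          smul_eq_mul, Finset.mul_sum]
        apply Finset.sum_congr rfl
        intro u _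
        split_ifs
        · rw [hρ]; simp
        · simp
      rw [h3, h4, Matrix.smul_mul]
    · intro j _ hj
      simp only [Finset.sum_apply, Pi.mul_apply, TTmap_apply]
      apply Finset.sum_eq_zero
      intro p _
      apply Finset.sum_eq_zero
      intro q _
      rw [Pi.single_eq_of_ne (Ne.symm hj)]
      simp
    · simp

/-- formula for a pseudo-rank function on idempotents -/
lemma TT_rank_formula (hn : ∀ j, 0 < n j) {M : TT J n K → ℝ} (hM : IsPseudoRankFunction M)
    (e : TT J n K) (he : e * e = e) :
    M e = ∑ j, (e j).rank * M (cell j ⟨0, hn _⟩ ⟨0, hn _⟩ 1) := by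
  obtain ⟨x, y, h1, h2, h3, h4, -⟩ := TT_decomp hn e he (fun j => (e j).rank) (fun _ => rfl)
  conv_lhs => rw [← h4]
  rw [orth_sum_rank hM]
  · rw [Fintype.sum_sigma]
    apply Finset.sum_congr rfl
    intro j _
    have : ∀ a : Fin (e j).rank, M (x ⟨j, a⟩ * y ⟨j, a⟩) = M (cell j ⟨0, hn _⟩ ⟨0, hn _⟩ 1) := by
      intro a
      apply hM.eqv
      · rw [h1]; simp
      · exact h2 ⟨j, a⟩
    simp [this]
  · intro p q
    have : x p * y p * (x q * y q) = x p * (y p * x q) * y q := by simp only [mul_assoc]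
    rw [this, h1]
    split_ifs with h
    · subst h
      rw [h2]
    · simp

lemma zset_idem {R : Type} [Ring R] (S : Finset J) : (zset S : TT J n R) * zset S = zset S := by
  funext j
  simp only [Pi.mul_apply, zset]
  split_ifs <;> simp

lemma zset_comm {R : Type} [Ring R] (S : Finset J) (x : TT J n R) :
    zset S * x = x * zset S := by
  funext j
  simp only [Pi.mul_apply, zset]
  split_ifs <;> simp

lemma TTmap_zset {R S : Type} [Ring R] [Ring S] (f : R →+* S) (s : Finset J) :
    TTmap f (zset s : TT J n R) = zset s := by
  funext j
  rw [TTmap_apply]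
  simp only [zset]
  split_ifs <;> simp

lemma TT_rank_zset (hn : ∀ j, 0 < n j) {M : TT J n K → ℝ} (hM : IsPseudoRankFunction M)
    (S : Finset J) (e : TT J n K) (he : e * e = e) :
    M (zset S * e) = ∑ j ∈ S, (e j).rank * M (cell j ⟨0, hn _⟩ ⟨0, hn _⟩ 1) := by
  rw [TT_rank_formula hn hM]
  · rw [← Finset.sum_subset (Finset.subset_univ S)]
    · apply Finset.sum_congr rfl
      intro j hj
      simp [zset, hj]
    · intro j _ hj
      simp [zset, hj]
  · rw [← mul_assoc, mul_assoc _ e, ← zset_comm, ← mul_assoc, zset_idem, mul_assoc, he]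

end TTK

/-! ### Consequences of extremality -/

lemma rank_split {Q : Type*} [Ring Q] {NQ : Q → ℝ} (hN : IsPseudoRankFunction NQ)
    (hreg : VNRegular Q) (z x : Q) (hz : z * z = z) (hzx : z * x = x * z) :
    NQ x = NQ (z * x) + NQ ((1 - z) * x) := by
  apply le_antisymm
  · have := hN.subadditive (z * x) ((1 - z) * x)
    rwa [← add_mul, add_sub_cancel, one_mul] at this
  · -- general construction
    have key : ∀ t : Q, t * t = t → t * x = x * t → ∃ w, x * (t * w) * (x * (t * w)) = x * (t * w) ∧
        t * (x * (t * w)) = x * (t * w) ∧ x * (t * w) * t = x * (t * w) ∧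
        NQ (x * (t * w)) = NQ (t * x) := by
      intro t ht htx
      obtain ⟨w, hw⟩ := hreg (t * x)
      have e1 : x * (t * (w * t)) = (t * x) * (w * t) := by
        rw [← mul_assoc x t, ← htx]
      have e2 : (t * x) * (w * t) * (t * x) = t * x := by
        calc (t * x) * (w * t) * (t * x) = t * x * w * ((t * t) * x) := by simp only [mul_assoc]
          _ = t * x * w * (t * x) := by rw [ht]
          _ = t * x := hw.symm
      refine ⟨w * t, ?_, ?_, ?_, ?_⟩
      · rw [e1, ← mul_assoc (t * x * (w * t)), e2]
      · rw [e1]; simp only [← mul_assoc]; rw [ht]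
      · simp only [mul_assoc]; rw [ht]
      · rw [e1]
        apply le_antisymm
        · exact hN.mul_le_left _ _
        · conv_lhs => rw [← e2]
          exact hN.mul_le_left _ _
    have hz' : (1 - z) * (1 - z) = 1 - z := by simp [sub_mul, mul_sub, hz]
    have hzx' : (1 - z) * x = x * (1 - z) := by simp [sub_mul, mul_sub, hzx]
    obtain ⟨w, a1, a2, a3, a4⟩ := key z hz hzx
    obtain ⟨w', b1, b2, b3, b4⟩ := key (1 - z) hz' hzx'
    rw [← a4, ← b4]
    rw [← hN.add_of_orthogonal _ _ a1 b1, ← mul_add]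
    · exact hN.mul_le_left _ _
    · rw [← a3, ← b2, mul_assoc, ← mul_assoc z]
      simp [mul_sub, hz]
    · rw [← b3, ← a2, mul_assoc, ← mul_assoc (1 - z)]
      simp [sub_mul, hz]

open Filter Topology in
lemma asymptotic_independence {A : Type*} [Ring A] {N : A → ℝ} (hN : IsPseudoRankFunction N)
    (hext : IsExtremalPseudoRankFunction N)
    (hsplit : ∀ z x : A, z * z = z → z * x = x * z → N x = N (z * x) + N ((1 - z) * x))
    (C : ℕ → Subring A) (hC : Monotone C) (hU : ∀ a, ∃ n, a ∈ C n) (a : A) (ε : ℝ) (hε : 0 < ε) :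
    ∃ m₀, ∀ m ≥ m₀, ∀ z ∈ C m, z * z = z → (∀ x ∈ C m, z * x = x * z) →
      |N (z * a) - N z * N a| < ε := by
  by_contra hcon
  push Not at hcon
  choose m hm z hzm hzz hzc hbad using hcon
  let U : Ultrafilter ℕ := hyperfilter ℕ
  have hUtop : (U : Filter ℕ) ≤ atTop := by
    rw [← Nat.cofinite_eq_atTop]; exact hyperfilter_le_cofinite
  have hcomm : ∀ x : A, ∀ᶠ i in (U : Filter ℕ), z i * x = x * z i := by
    intro x
    obtain ⟨n, hn⟩ := hU x
    apply hUtop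
    filter_upwards [eventually_ge_atTop n] with i hi
    exact hzc i x (hC (hi.trans (hm i)) hn)
  have hlim : ∀ u : ℕ → ℝ, (∀ i, 0 ≤ u i) → (∀ i, u i ≤ 1) →
      ∃ l, Tendsto u U (𝓝 l) := by
    intro u h0 h1
    have := (isCompact_Icc (a := (0 : ℝ)) (b := 1)).ultrafilter_le_nhds (U.map u)
      (by
        rw [le_principal_iff]
        change u ⁻¹' _ ∈ U
        exact Filter.mem_of_superset Filter.univ_mem (fun i _ => ⟨h0 i, h1 i⟩))
    obtain ⟨l, _, hl⟩ := this
    exact ⟨l, hl⟩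
  choose F hF using fun x => hlim (fun i => N (z i * x)) (fun i => hN.nonneg _) (fun i => hN.le_one _)
  choose G hG using fun x => hlim (fun i => N ((1 - z i) * x)) (fun i => hN.nonneg _)
    (fun i => hN.le_one _)
  -- common properties
  have props : ∀ (t : ℕ → A) (H : A → ℝ), (∀ i, t i * t i = t i) →
      (∀ x : A, ∀ᶠ i in (U : Filter ℕ), t i * x = x * t i) →
      (∀ x, Tendsto (fun i => N (t i * x)) U (𝓝 (H x))) → 0 < H 1 →
      IsPseudoRankFunction (fun x => H x / H 1) := by
    intro t H ht hc hH hpos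
    have hmulr : ∀ x y, H (x * y) ≤ H y := by
      intro x y
      apply le_of_tendsto_of_tendsto (hH (x * y)) (hH y)
      filter_upwards [hc x] with i hi
      rw [← mul_assoc, hi, mul_assoc]
      exact hN.mul_le_right _ _
    have hmull : ∀ x y, H (x * y) ≤ H x := by
      intro x y
      apply le_of_tendsto_of_tendsto (hH (x * y)) (hH x)
      filter_upwards with i
      rw [← mul_assoc]
      exact hN.mul_le_left _ _
    have hnn : ∀ x, 0 ≤ H x := fun x => ge_of_tendsto' (hH x) (fun i => hN.nonneg _)
    refine ⟨fun x => div_nonneg (hnn x) hpos.le, fun x => ?_, div_self hpos.ne', ?_, ?_, ?_, ?_⟩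
    · rw [div_le_one hpos]
      have := hmull 1 x
      rwa [one_mul] at this
    · intro x y
      rw [← add_div]
      apply div_le_div_of_nonneg_right _ hpos.le
      apply le_of_tendsto_of_tendsto (hH (x + y)) ((hH x).add (hH y))
      filter_upwards with i
      rw [mul_add]
      exact hN.subadditive _ _
    · intro x y
      exact div_le_div_of_nonneg_right (hmull x y) hpos.le
    · intro x y
      exact div_le_div_of_nonneg_right (hmulr x y) hpos.le
    · intro e f he hf hef hfe
      rw [← add_div]
      congr 1
      apply tendsto_nhds_unique (hH (e + f)) 
      refine Tendsto.congr' ?_ ((hH e).add (hH f))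
      filter_upwards [hc e, hc f] with i hie hif
      rw [mul_add, hN.add_of_orthogonal]
      · unfold IsIdempotentElem
        rw [mul_assoc, ← mul_assoc e, ← hie, mul_assoc, he, ← mul_assoc, ht]
      · unfold IsIdempotentElem
        rw [mul_assoc, ← mul_assoc f, ← hif, mul_assoc, hf, ← mul_assoc, ht]
      · rw [hie, mul_assoc, ← mul_assoc (t i), ht, hif, ← mul_assoc, hef, zero_mul]
      · rw [hif, mul_assoc, ← mul_assoc (t i), ht, hie, ← mul_assoc, hfe, zero_mul]
  have hFG : ∀ x, F x + G x = N x := by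
    intro x
    apply tendsto_nhds_unique ((hF x).add (hG x))
    refine Tendsto.congr' ?_ tendsto_const_nhds
    filter_upwards [hcomm x] with i hi
    exact hsplit _ _ (hzz i) hi
  have hFn : ∀ x, 0 ≤ F x := fun x => ge_of_tendsto' (hF x) (fun i => hN.nonneg _)
  have hGn : ∀ x, 0 ≤ G x := fun x => ge_of_tendsto' (hG x) (fun i => hN.nonneg _)
  have hF1 : F a ≤ F 1 := by
    apply le_of_tendsto_of_tendsto (hF a) (hF 1)
    filter_upwards with i
    rw [mul_one]
    exact hN.mul_le_left _ _
  have hG1 : G a ≤ G 1 := by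
    apply le_of_tendsto_of_tendsto (hG a) (hG 1)
    filter_upwards with i
    rw [mul_one]
    exact hN.mul_le_left _ _
  have h11 := hFG 1
  rw [hN.map_one] at h11
  have hconcl : F a = F 1 * N a := by
    rcases (hFn 1).eq_or_lt with h0 | h0
    · have := hFn a
      rw [← h0] at hF1 ⊢
      linarith
    rcases (hGn 1).eq_or_lt with h0' | h0'
    · have h2 := hGn a
      have h3 := hFG a
      have : F 1 = 1 := by linarith
      rw [this, one_mul]
      linarith
    have p1 := props z F hzz hcomm hF h0
    have p2 := props (fun i => 1 - z i) G (fun i => by simp [sub_mul, mul_sub, hzz])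
      (fun x => by
        filter_upwards [hcomm x] with i hi
        simp [sub_mul, mul_sub, hi]) hG h0'
    have hseg : N ∈ openSegment ℝ (fun x => F x / F 1) (fun x => G x / G 1) := by
      refine ⟨F 1, G 1, h0, h0', h11, ?_⟩
      funext x
      simp only [Pi.add_apply, Pi.smul_apply, smul_eq_mul]
      rw [mul_div_cancel₀ _ h0.ne', mul_div_cancel₀ _ h0'.ne']
      exact hFG x
    have hx := mem_extremePoints.mp hext
    have := (hx.2 _ p1 _ p2 hseg).1
    have := congrFun this a
    rw [← this, mul_div_cancel₀ _ h0.ne']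
  have hlimbad : ε ≤ |F a - F 1 * N a| := by
    have ht : Tendsto (fun i => |N (z i * a) - N (z i * 1) * N a|) U (𝓝 |F a - F 1 * N a|) :=
      ((hF a).sub ((hF 1).mul_const _)).abs
    apply ge_of_tendsto' ht
    intro i
    rw [mul_one]
    exact hbad i
  rw [hconcl, sub_self, abs_zero] at hlimbad
  linarith

/-- A simple regular ring with a rank function with a gap at zero has no continuous rank function. -/
lemma gap_contra {Q : Type*} [Ring Q] {NQ : Q → ℝ} (hNQ : IsRankFunction NQ)
    (hfactor : IsContinuousFactor Q) (c : ℝ) (hc : 0 < c) (hgap : ∀ q, NQ q = 0 ∨ c ≤ NQ q) :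
    False := by
  obtain ⟨hsimple, hreg, -, -, N', hN', hrange⟩ := hfactor
  obtain ⟨hN, hfaith⟩ := hNQ
  obtain ⟨hM, hfaith'⟩ := hN'
  have hpos : ∀ q, q ≠ 0 → c ≤ NQ q := fun q hq => (hgap q).resolve_left (fun h => hq (hfaith q h))
  -- an element with almost minimal rank
  have hne1 : (1 : Q) ≠ 0 := by
    intro h
    have := hN.map_one
    rw [h, hN.map_zero] at this
    norm_num at this
  let S : Set ℝ := Set.image NQ {q | q ≠ 0}
  have hSne : S.Nonempty := ⟨_, 1, hne1, rfl⟩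
  have hSb : BddBelow S := ⟨0, by rintro _ ⟨q, _, rfl⟩; exact hN.nonneg q⟩
  obtain ⟨_, ⟨x, hx, rfl⟩, hxlt⟩ := exists_lt_of_csInf_lt hSne (lt_add_of_pos_right (sInf S) hc)
  obtain ⟨y, hy⟩ := hreg x
  set e := x * y with he
  have hee : e * e = e := by rw [he, ← mul_assoc, ← hy]
  have hex : e * x = x := hy.symm
  have hene : e ≠ 0 := by
    intro h; rw [h, zero_mul] at hex; exact hx hex.symm
  have hNe : NQ e < sInf S + c := lt_of_le_of_lt (hN.mul_le_left _ _) hxlt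
  -- any idempotent below `e` is `0` or `e`
  have hmin : ∀ h : Q, h * h = h → e * h = h → h * e = h → h ≠ 0 → h = e := by
    intro h hh h1 h2 hne
    have e1 := hN.sub_of_le hee hh h1 h2
    have e2 : sInf S ≤ NQ h := csInf_le hSb ⟨h, hne, rfl⟩
    have e3 : NQ (e - h) < c := by linarith
    rcases hgap (e - h) with h4 | h4
    · exact (sub_eq_zero.mp (hfaith _ h4)).symm
    · linarith
  -- every nonzero idempotent dominates a copy of `e`
  have hcopy : ∀ f : Q, f * f = f → f ≠ 0 → ∃ g, g * g = g ∧ f * g = g ∧ g * f = g ∧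
      N' g = N' e ∧ g ≠ 0 := by
    intro f hf hfne
    have hex : ∃ q, f * q * e ≠ 0 := by
      by_contra hcon
      push Not at hcon
      -- the two-sided ideal generated by `e`
      let I : TwoSidedIdeal Q := TwoSidedIdeal.mk' {t | ∀ q, f * q * t = 0}
        (by intro q; simp)
        (by intro s t hs ht q; rw [mul_add, hs q, ht q, add_zero])
        (by intro s hs q; rw [mul_neg, hs q, neg_zero])
        (by intro s t ht q; rw [← mul_assoc, mul_assoc f]; exact ht _)
        (by intro s t hs q; rw [← mul_assoc, hs q, zero_mul])
      have hmem : ∀ t, t ∈ I ↔ ∀ q, f * q * t = 0 := by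
        intro t
        simp [I, TwoSidedIdeal.mem_mk']
      have hbt := hsimple.simple.eq_bot_or_eq_top I
      rcases hbt with h | h
      · have : e ∈ I := (hmem e).2 hcon
        rw [h] at this
        exact hene (by simpa using this)
      · have : (1 : Q) ∈ I := by rw [h]; trivial
        have := (hmem 1).1 this 1
        simp at this
        exact hfne this
    obtain ⟨q, hq⟩ := hex
    set x := f * q * e with hxdef
    obtain ⟨y, hy⟩ := hreg x
    have hfx : f * x = x := by
      rw [hxdef, mul_assoc f q e, ← mul_assoc f f, hf]
    have hxe : x * e = x := by rw [hxdef, mul_assoc, hee]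
    have hxyx : x * (e * y * f) * x = x := by
      calc x * (e * y * f) * x = (x * e) * y * (f * x) := by simp only [mul_assoc]
        _ = x := by rw [hxe, hfx, ← hy]
    have hh : (e * y * f * x) = e := by
      apply hmin
      · rw [mul_assoc (e * y * f), ← mul_assoc x, hxyx]
      · simp only [← mul_assoc]; rw [hee]
      · rw [mul_assoc (e * y * f), hxe]
      · intro h
        rw [mul_assoc x, h, mul_zero] at hxyx
        exact hq hxyx.symm
    refine ⟨x * (e * y * f), ?_, ?_, ?_, ?_, ?_⟩
    · rw [← mul_assoc (x * (e * y * f)), hxyx]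
    · rw [← mul_assoc, hfx]
    · simp only [mul_assoc]; rw [hf]
    · exact hM.eqv hh hxe
    · intro h
      rw [h, zero_mul] at hxyx
      exact hq hxyx.symm
  -- induction
  have hind : ∀ k : ℕ, ∀ f : Q, f * f = f → NQ f ≤ k * c → ∃ l : ℕ, N' f = l * N' e := by
    intro k
    induction k with
    | zero =>
      intro f hf hk
      have : f = 0 := by
        apply hfaith
        apply le_antisymm _ (hN.nonneg f)
        simpa using hk
      exact ⟨0, by rw [this, hM.map_zero]; simp⟩
    | succ k ih =>
      intro f hf hk
      by_cases hf0 : f = 0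
      · exact ⟨0, by rw [hf0, hM.map_zero]; simp⟩
      obtain ⟨g, g1, g2, g3, g4, g5⟩ := hcopy f hf hf0
      have h1 := hN.sub_of_le hf g1 g2 g3
      have h2 := hM.sub_of_le hf g1 g2 g3
      have h3 := hpos g g5
      obtain ⟨l, hl⟩ := ih (f - g) (by simp [sub_mul, mul_sub, hf, g1, g2, g3])
        (by rw [h1]; push_cast at hk; linarith)
      refine ⟨l + 1, ?_⟩
      push_cast
      linarith
  have he0 : 0 < N' e := lt_of_le_of_ne (hM.nonneg e) (fun h => hene (hfaith' e h.symm))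
  have he1 := hM.le_one e
  have hmem : N' e / 2 ∈ Set.range N' := by
    rw [hrange]
    constructor <;> linarith
  obtain ⟨t, ht⟩ := hmem
  obtain ⟨s, hs⟩ := hreg t
  have hts : (t * s) * (t * s) = t * s := by rw [← mul_assoc, ← hs]
  have hNts : N' (t * s) = N' t := by
    apply le_antisymm (hM.mul_le_left _ _)
    conv_lhs => rw [hs]
    exact hM.mul_le_left _ _
  obtain ⟨k, hk⟩ := exists_nat_gt (1 / c)
  obtain ⟨l, hl⟩ := hind k (t * s) hts (by
    rw [div_lt_iff₀ hc] at hk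
    exact (hN.le_one _).trans hk.le)
  rw [hNts, ht] at hl
  have h2 : (1 : ℝ) / 2 = l := by
    have : N' e * (1 / 2) = N' e * l := by linarith
    exact mul_left_cancel₀ he0.ne' this
  have h3 : (1 : ℝ) = ((2 * l : ℕ) : ℝ) := by push_cast; linarith
  have h4 : 1 = 2 * l := by exact_mod_cast h3
  omega

/-! ### The tower of matricial subrings -/

lemma IsPseudoRankFunction.comp {R S : Type*} [Ring R] [Ring S] {N : S → ℝ}
    (hN : IsPseudoRankFunction N) (f : R →+* S) : IsPseudoRankFunction (fun x => N (f x)) := by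
  refine ⟨fun x => hN.nonneg _, fun x => hN.le_one _, by simp [hN.map_one], ?_, ?_, ?_, ?_⟩
  · intro a b; rw [map_add]; exact hN.subadditive _ _
  · intro a b; rw [map_mul]; exact hN.mul_le_left _ _
  · intro a b; rw [map_mul]; exact hN.mul_le_right _ _
  · intro e g he hg h1 h2
    rw [map_add]
    apply hN.add_of_orthogonal
    · unfold IsIdempotentElem; rw [← map_mul, he]
    · unfold IsIdempotentElem; rw [← map_mul, hg]
    · rw [← map_mul, h1, _root_.map_zero]
    · rw [← map_mul, h2, _root_.map_zero]

/-- Presentation of an ultramatricial `D`-ring by a tower of products of matrix rings. -/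
structure Tow (D A : Type) [DivisionRing D] [Ring A] (ι : D →+* A) where
  k : ℕ → ℕ
  n : ∀ m, Fin (k m + 1) → ℕ
  hn : ∀ m j, 0 < n m j
  Ψ : ∀ m, TT (Fin (k m + 1)) (n m) D →+* A
  scalΨ : ∀ m d, Ψ m (scal d) = ι d
  mono : Monotone fun m => (Ψ m).range
  cover : ∀ a, ∃ m, a ∈ (Ψ m).range
  inj : ∀ m, Function.Injective (Ψ m)

lemma exists_tow {D A : Type} [DivisionRing D] [Ring A] {ι : D →+* A}
    (hA : IsUltramatricialDRing D A ι) : Nonempty (Tow D A ι) := by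
  obtain ⟨C, hC1, hC2, hC3⟩ := hA
  choose h k n hn e he using hC3
  have hrange : ∀ m, ((C m).subtype.comp ((e m).symm.toRingHom)).range = C m := by
    intro m
    ext a
    constructor
    · rintro ⟨x, rfl⟩
      exact ((e m).symm x).2
    · intro ha
      exact ⟨e m ⟨a, ha⟩, by simp⟩
  refine ⟨⟨k, n, hn, fun m => (C m).subtype.comp ((e m).symm.toRingHom), ?_, ?_, ?_, ?_⟩⟩
  · intro m d
    have := he m d
    have h2 : (e m).symm (scal d) = RingHom.codRestrict ι (C m) (h m) d := by
      rw [RingEquiv.symm_apply_eq, this]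
      rfl
    simp [h2]
  · intro m m' hmm
    simp only [hrange]
    exact monotone_nat_of_le_succ hC1 hmm
  · intro a
    obtain ⟨m, hm⟩ := hC2 a
    exact ⟨m, by rw [hrange]; exact hm⟩
  · intro m
    exact Subtype.val_injective.comp (e m).symm.injective

namespace Tow
variable {D A : Type} [DivisionRing D] [Ring A] {ι : D →+* A} (T : Tow D A ι)

/-- The centre of `D` embedded in `D`. -/
def rho (D : Type) [DivisionRing D] : Subring.center D →+* D := (Subring.center D).subtype

lemma rho_comm (x : Subring.center D) (d : D) : rho D x * d = d * rho D x :=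
  (Subring.mem_center_iff.mp x.2 d).symm

/-- blocks over the centre -/
def ψ (m : ℕ) : TT (Fin (T.k m + 1)) (T.n m) (Subring.center D) →+* A :=
  (T.Ψ m).comp (TTmap (rho D))

lemma ψ_apply (m : ℕ) (x) : T.ψ m x = T.Ψ m (TTmap (rho D) x) := rfl

lemma ψ_inj (m : ℕ) : Function.Injective (T.ψ m) := by
  apply (T.inj m).comp
  intro x y hxy
  funext j
  ext p q
  have := congrFun (congrFun (congrFun hxy j) p) q
  exact this

lemma ψ_comm (m : ℕ) (x) (d : D) : ι d * T.ψ m x = T.ψ m x * ι d := by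
  rw [← T.scalΨ m, ψ_apply, ← map_mul, ← map_mul]
  congr 1
  funext j
  ext p q
  simp only [Pi.mul_apply, scal, smul_mul_assoc, one_mul, TTmap_apply, Matrix.smul_apply,
    Matrix.map_apply, smul_eq_mul]
  rw [Matrix.mul_apply, Finset.sum_eq_single q]
  · simp [rho_comm]
  · intro r _ hr
    simp [Matrix.one_apply_ne hr]
  · simp

lemma ψ_of_comm (m : ℕ) (a : A) (ha : a ∈ (T.Ψ m).range) (hc : ∀ d, ι d * a = a * ι d) :
    a ∈ (T.ψ m).range := by
  obtain ⟨x, rfl⟩ := ha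
  have hx : ∀ d, scal d * x = x * scal d := by
    intro d
    apply T.inj m
    rw [map_mul, map_mul, T.scalΨ]
    exact hc d
  have hx' : ∀ j p q, x j p q ∈ Subring.center D := by
    intro j p q
    rw [Subring.mem_center_iff]
    intro d
    have h := congrFun (congrFun (congrFun (hx d) j) p) q
    simp only [Pi.mul_apply, scal, smul_mul_assoc, one_mul, Matrix.smul_apply, smul_eq_mul] at h
    rw [h, Matrix.mul_apply, Finset.sum_eq_single q]
    · simp
    · intro r _ hr
      simp [Matrix.one_apply_ne hr]
    · simp
  exact ⟨fun j => Matrix.of fun p q => ⟨x j p q, hx' j p q⟩, rfl⟩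

lemma ψ_mono : Monotone fun m => (T.ψ m).range := by
  intro m m' h
  rintro _ ⟨x, rfl⟩
  apply T.ψ_of_comm
  · exact T.mono h ⟨_, rfl⟩
  · exact T.ψ_comm m x

variable {N : A → ℝ}

/-- weight of a block -/
def wt (N : A → ℝ) (m : ℕ) (j : Fin (T.k m + 1)) : ℝ :=
  N (T.ψ m (cell j ⟨0, T.hn m j⟩ ⟨0, T.hn m j⟩ 1))

lemma wt_nonneg (hN : IsPseudoRankFunction N) (m j) : 0 ≤ T.wt N m j := hN.nonneg _

lemma rank_formula (hN : IsPseudoRankFunction N) (m : ℕ) (e) (he : e * e = e) :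
    N (T.ψ m e) = ∑ j, (e j).rank * T.wt N m j :=
  TT_rank_formula (T.hn m) (hN.comp (T.ψ m)) e he

lemma rank_zset_mul (hN : IsPseudoRankFunction N) (m : ℕ) (S) (e) (he : e * e = e) :
    N (T.ψ m (zset S) * T.ψ m e) = ∑ j ∈ S, (e j).rank * T.wt N m j := by
  rw [← map_mul]
  exact TT_rank_zset (T.hn m) (hN.comp (T.ψ m)) S e he

lemma rank_zset (hN : IsPseudoRankFunction N) (m : ℕ) (S) :
    N (T.ψ m (zset S)) = ∑ j ∈ S, T.n m j * T.wt N m j := by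
  have := T.rank_zset_mul hN m S 1 (by simp)
  simpa using this

/-- asymptotic independence, as a hypothesis -/
def AI (N : A → ℝ) : Prop := ∀ a ε, 0 < ε → ∃ m₀, ∀ m ≥ m₀, ∀ S,
      |N (T.ψ m (zset S) * a) - N (T.ψ m (zset S)) * N a| < ε

lemma ai (hN : IsPseudoRankFunction N)
    (hext : IsExtremalPseudoRankFunction N)
    (hsplit : ∀ z x : A, z * z = z → z * x = x * z → N x = N (z * x) + N ((1 - z) * x)) :
    T.AI N := by
  intro a ε hε
  obtain ⟨m₀, h⟩ := asymptotic_independence hN hext hsplit _ T.mono T.cover a ε hε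
  refine ⟨m₀, fun m hm S => h m hm _ ⟨_, rfl⟩ ?_ ?_⟩
  · rw [← map_mul, zset_idem]
  · rintro _ ⟨x, rfl⟩
    rw [ψ_apply, TTmap_zset, ← map_mul, ← map_mul, zset_comm]

/-- concentration of the normalised ranks -/
lemma concentration (hN : IsPseudoRankFunction N) (hAI : T.AI N) (a : A) (haa : a * a = a)
    (n : ℕ) (ha : a ∈ (T.ψ n).range) (δ ε : ℝ) (hδ : 0 < δ) (hε : 0 < ε) :
    ∃ m₀, ∀ m ≥ m₀, ∀ x, T.ψ m x = a → ∀ S : Finset (Fin (T.k m + 1)),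
      (∀ j ∈ S, δ * T.n m j ≤ |((x j).rank : ℝ) - N a * T.n m j|) → 
      ∑ j ∈ S, T.n m j * T.wt N m j < ε := by
  obtain ⟨m₀, h⟩ := hAI a (δ * (ε / 2)) (by positivity)
  refine ⟨m₀, fun m hm x hx S hS => ?_⟩
  have hxx : x * x = x := by
    apply T.ψ_inj m
    rw [map_mul, hx, haa]
  have hdich : ∀ j ∈ S, (N a + δ) * T.n m j ≤ (x j).rank ∨ ((x j).rank : ℝ) ≤ (N a - δ) * T.n m j := by
    intro j hj
    rcases le_abs.mp (hS j hj) with h1 | h1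
    · left; linarith
    · right; linarith
  let P := S.filter fun j => (N a + δ) * T.n m j ≤ (x j).rank
  let P' := S.filter fun j => ¬ (N a + δ) * T.n m j ≤ (x j).rank
  have hsum : ∑ j ∈ S, T.n m j * T.wt N m j =
      ∑ j ∈ P, T.n m j * T.wt N m j + ∑ j ∈ P', T.n m j * T.wt N m j :=
    (Finset.sum_filter_add_sum_filter_not _ _ _).symm
  have h1 := abs_lt.mp (h m hm P)
  have h2 := abs_lt.mp (h m hm P')
  rw [← hx, T.rank_zset_mul hN m _ x hxx, hx, T.rank_zset hN] at h1 h2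
  have e1 : (N a + δ) * ∑ j ∈ P, T.n m j * T.wt N m j ≤ ∑ j ∈ P, (x j).rank * T.wt N m j := by
    rw [Finset.mul_sum]
    apply Finset.sum_le_sum
    intro j hj
    rw [← mul_assoc]
    exact mul_le_mul_of_nonneg_right (Finset.mem_filter.mp hj).2 (T.wt_nonneg hN m j)
  have e2 : ∑ j ∈ P', (x j).rank * T.wt N m j ≤ (N a - δ) * ∑ j ∈ P', T.n m j * T.wt N m j := by
    rw [Finset.mul_sum]
    apply Finset.sum_le_sum
    intro j hj
    rw [← mul_assoc]
    have := Finset.mem_filter.mp hj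
    exact mul_le_mul_of_nonneg_right ((hdich j this.1).resolve_left this.2) (T.wt_nonneg hN m j)
  have e3 : δ * ∑ j ∈ P, T.n m j * T.wt N m j < δ * (ε / 2) := by
    linarith [h1.2]
  have e4 : δ * ∑ j ∈ P', T.n m j * T.wt N m j < δ * (ε / 2) := by
    linarith [h2.1]
  have e5 := lt_of_mul_lt_mul_left e3 hδ.le
  have e6 := lt_of_mul_lt_mul_left e4 hδ.le
  linarith

/-- small blocks have asymptotically weight zero -/
lemma small_blocks (hN : IsPseudoRankFunction N) (hAI : T.AI N)
    (hgap : ∀ c : ℝ, 0 < c → ¬ ∀ a, N a = 0 ∨ c ≤ N a)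
    (L : ℕ) (ε : ℝ) (hε : 0 < ε) :
    ∃ m₀, ∀ m ≥ m₀, ∀ S : Finset (Fin (T.k m + 1)),
      (∀ j ∈ S, T.n m j < L) → ∑ j ∈ S, T.n m j * T.wt N m j < ε := by
  by_contra hcon
  push Not at hcon
  have hL : 0 < L := by
    by_contra h0
    obtain ⟨m, hm, S, hS, hS'⟩ := hcon 0
    have : S = ∅ := by
      apply Finset.eq_empty_of_forall_notMem
      intro j hj
      have := hS j hj
      omega
    rw [this] at hS'
    simp at hS'
    linarith
  have hLr : (0 : ℝ) < L := by exact_mod_cast hL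
  -- idempotents
  have hid : ∀ a : A, a * a = a → ∀ n, a ∈ (T.ψ n).range → N a = 0 ∨ 1 / (L : ℝ) ≤ N a := by
    intro a haa n ha
    by_contra hno
    push Not at hno
    obtain ⟨hne, hlt⟩ := hno
    have hpos : 0 < N a := lt_of_le_of_ne (hN.nonneg a) (Ne.symm hne)
    obtain ⟨m₀, hm₀⟩ := T.concentration hN hAI a haa n ha (min (N a) (1 / L - N a)) ε
      (lt_min hpos (by linarith)) hε
    obtain ⟨m, hm, S, hS, hS'⟩ := hcon (max m₀ n)
    obtain ⟨x, hx⟩ := T.ψ_mono ((le_max_right _ _).trans hm) ha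
    have := hm₀ m ((le_max_left _ _).trans hm) x hx S (by
      intro j hj
      have hnj : (0 : ℝ) < T.n m j := by exact_mod_cast T.hn m j
      rcases Nat.eq_zero_or_pos (x j).rank with h0 | h0
      · rw [h0]
        rw [le_abs]
        right
        have : min (N a) (1 / L - N a) * T.n m j ≤ N a * T.n m j :=
          mul_le_mul_of_nonneg_right (min_le_left _ _) hnj.le
        push_cast
        linarith
      · rw [le_abs]
        left
        have h1 : min (N a) (1 / L - N a) * T.n m j ≤ (1 / L - N a) * T.n m j :=
          mul_le_mul_of_nonneg_right (min_le_right _ _) hnj.le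
        have h2 : (1 / (L : ℝ)) * T.n m j ≤ 1 := by
          rw [one_div, inv_mul_le_iff₀ hLr, mul_one]
          exact_mod_cast (hS j hj).le
        have h3 : (1 : ℝ) ≤ (x j).rank := by exact_mod_cast h0
        linarith)
    linarith
  refine hgap (1 / L) (by positivity) fun a => ?_
  by_contra hno
  push Not at hno
  obtain ⟨hne, hlt⟩ := hno
  obtain ⟨m, ⟨x, rfl⟩⟩ := T.cover a
  have hex : ∃ j p q, N (T.Ψ m (cell j p q (x j p q))) ≠ 0 := by
    by_contra hall
    push Not at hall
    apply hne
    have hxs : x = ∑ j, ∑ p, ∑ q, cell j p q (x j p q) := by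
      funext l
      rw [Finset.sum_apply, Finset.sum_eq_single l]
      · conv_lhs => rw [Matrix.matrix_eq_sum_single (x l)]
        simp only [Finset.sum_apply, cell, Pi.single_eq_same]
      · intro j _ hj
        simp only [Finset.sum_apply, cell]
        apply Finset.sum_eq_zero
        intro p _
        apply Finset.sum_eq_zero
        intro q _
        rw [Pi.single_eq_of_ne (Ne.symm hj)]
      · simp
    apply le_antisymm _ (hN.nonneg _)
    rw [hxs]
    simp only [map_sum]
    refine (hN.sum_le _ _).trans (Finset.sum_nonpos fun j _ => ?_)
    refine (hN.sum_le _ _).trans (Finset.sum_nonpos fun p _ => ?_)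
    refine (hN.sum_le _ _).trans (Finset.sum_nonpos fun q _ => ?_)
    exact (hall j p q).le
  obtain ⟨j, p, q, hjpq⟩ := hex
  have hd : x j p q ≠ 0 := by
    intro h
    apply hjpq
    rw [h]
    simp [cell, hN.map_zero]
  have hmap : TTmap (rho D) (cell j p p 1) = (cell j p p 1 : TT _ (T.n m) D) := by
    funext l
    rw [TTmap_apply]
    by_cases hl : l = j
    · subst hl
      simp only [cell, Pi.single_eq_same]
      ext s t
      simp only [Matrix.map_apply, Matrix.single_apply]
      split_ifs <;> simp
    · simp [cell, Pi.single_eq_of_ne hl]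
  have hE : T.ψ m (cell j p p 1) = T.Ψ m (cell j p p 1) := by rw [ψ_apply, hmap]
  have h1 : (cell j p q (x j p q) : TT _ (T.n m) D) = cell j p p 1 * cell j p q (x j p q) := by
    simp [cell, ← Pi.single_mul]
  have h2 : (cell j p p 1 : TT _ (T.n m) D) = cell j p p 1 * x * cell j q p (x j p q)⁻¹ := by
    funext l
    by_cases hl : l = j
    · subst hl
      simp only [cell, Pi.mul_apply, Pi.single_eq_same]
      rw [Matrix.single_mul_mul_single]
      simp [hd]
    · simp [cell, Pi.single_eq_of_ne hl]
  have h3 : N (T.Ψ m (cell j p p 1)) ≠ 0 := by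
    intro h
    apply hjpq
    apply le_antisymm _ (hN.nonneg _)
    rw [h1, map_mul, ← h]
    exact hN.mul_le_left _ _
  have h4 : N (T.Ψ m (cell j p p 1)) ≤ N (T.Ψ m x) := by
    rw [h2, map_mul, map_mul]
    exact hN.sandwich_le _ _ _
  rcases hid (T.ψ m (cell j p p 1)) (by rw [← map_mul]; simp [cell, ← Pi.single_mul]) m ⟨_, rfl⟩
    with h5 | h5
  · rw [hE] at h5; exact h3 h5
  · rw [hE] at h5; linarith

lemma sum_filter_exists_le {α I : Type*} [Fintype α] [Fintype I] (P : I → α → Prop) (w : α → ℝ)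
    (hw : ∀ a, 0 ≤ w a) [DecidablePred fun a => ∃ i, P i a] [∀ i, DecidablePred (P i)] :
    ∑ a ∈ Finset.univ.filter (fun a => ∃ i, P i a), w a ≤
      ∑ i, ∑ a ∈ Finset.univ.filter (P i), w a := by
  simp only [Finset.sum_filter]
  rw [Finset.sum_comm]
  apply Finset.sum_le_sum
  intro a _
  have hnn : ∀ i ∈ (Finset.univ : Finset I), 0 ≤ (if P i a then w a else 0) := by
    intro i _
    split_ifs
    · exact hw a
    · exact le_rfl
  split_ifs with h
  · obtain ⟨i, hi⟩ := h
    have := Finset.single_le_sum hnn (Finset.mem_univ i)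
    rwa [if_pos hi] at this
  · exact Finset.sum_nonneg hnn

open Classical in
/-- at a late stage, most blocks are good -/
lemma good_blocks (hN : IsPseudoRankFunction N) (hAI : T.AI N)
    (hgap : ∀ c : ℝ, 0 < c → ¬ ∀ a, N a = 0 ∨ c ≤ N a)
    {I : Type} [Fintype I] (f : I → A) (hf : ∀ i, f i * f i = f i) (n : ℕ)
    (hfn : ∀ i, f i ∈ (T.ψ n).range) (L : ℕ) (δ ε : ℝ) (hδ : 0 < δ) (hε : 0 < ε) :
    ∃ m, n < m ∧ ∃ (x : I → TT (Fin (T.k m + 1)) (T.n m) (Subring.center D))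
      (G : Finset (Fin (T.k m + 1))),
      (∀ i, T.ψ m (x i) = f i) ∧ 1 - ε < ∑ j ∈ G, T.n m j * T.wt N m j ∧
      ∀ j ∈ G, L ≤ T.n m j ∧ ∀ i, |((x i j).rank : ℝ) - N (f i) * T.n m j| < δ * T.n m j := by
  set ε' := ε / (Fintype.card I + 2) with hε'
  have hε'pos : 0 < ε' := by positivity
  choose m₀ hm₀ using fun i => T.concentration hN hAI (f i) (hf i) n (hfn i) δ ε' hδ hε'pos
  obtain ⟨m₁, hm₁⟩ := T.small_blocks hN hAI hgap L ε' hε'pos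
  let m := n + 1 + m₁ + ∑ i, m₀ i
  have hmi : ∀ i, m₀ i ≤ m := by
    intro i
    have := Finset.single_le_sum (fun i _ => Nat.zero_le (m₀ i)) (Finset.mem_univ i)
    omega
  choose x hx using fun i => T.ψ_mono (show n ≤ m by omega) (hfn i)
  let w : Fin (T.k m + 1) → ℝ := fun j => T.n m j * T.wt N m j
  have hw : ∀ j, 0 ≤ w j := fun j => mul_nonneg (Nat.cast_nonneg _) (T.wt_nonneg hN m j)
  have htot : ∑ j, w j = 1 := by
    have := T.rank_formula hN m 1 (by simp)
    rw [map_one, hN.map_one] at this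
    rw [this]
    simp [w]
  obtain ⟨P, hP0, hP1⟩ : ∃ P : Option I → Fin (T.k m + 1) → Prop,
      (∀ j, P none j ↔ T.n m j < L) ∧
      (∀ i j, P (some i) j ↔ δ * T.n m j ≤ |((x i j).rank : ℝ) - N (f i) * T.n m j|) :=
    ⟨fun o j => match o with
    | none => T.n m j < L
    | some i => δ * T.n m j ≤ |((x i j).rank : ℝ) - N (f i) * T.n m j|,
    fun j => Iff.rfl, fun i j => Iff.rfl⟩
  have hbad := sum_filter_exists_le P w hw
  have hbad2 : ∑ o, ∑ a ∈ Finset.univ.filter (P o), w a ≤ ∑ o : Option I, ε' := by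
    apply Finset.sum_le_sum
    rintro (_ | i) _
    · exact le_of_lt (hm₁ m (by omega) _
        (fun j hj => (hP0 j).mp (Finset.mem_filter.mp hj).2))
    · exact le_of_lt (hm₀ i m (hmi i) (x i) (hx i) _
        (fun j hj => (hP1 i j).mp (Finset.mem_filter.mp hj).2))
  have hbad3 : ∑ o : Option I, ε' < ε := by
    simp only [Finset.sum_const, Finset.card_univ, Fintype.card_option, nsmul_eq_mul]
    rw [hε', mul_div_assoc', div_lt_iff₀ (by positivity)]
    push_cast
    nlinarith
  refine ⟨m, by omega, x, Finset.univ.filter (fun j => ¬ ∃ o, P o j), hx, ?_, ?_⟩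
  · have := Finset.sum_filter_add_sum_filter_not Finset.univ (fun j => ∃ o, P o j) w
    rw [htot] at this
    change 1 - ε < ∑ j ∈ _, w j
    linarith
  · intro j hj
    have hj' := (Finset.mem_filter.mp hj).2
    push Not at hj'
    refine ⟨?_, fun i => ?_⟩
    · have := hj' none
      rw [hP0] at this
      exact not_lt.mp this
    · have := hj' (some i)
      rw [hP1] at this
      exact not_le.mp this

end Tow

/-! ### One refinement step -/

/-- (Non-unital) systems of matrix units. -/
def MSys {A S : Type} [Ring A] [DecidableEq S] (E : S → S → A) : Prop :=
  ∀ s t t' u, E s t * E t' u = if t = t' then E s u else 0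

lemma XYSys.msys {A S : Type} [Ring A] [DecidableEq S] {g : A} {X Y : S → A}
    (h : XYSys g X Y) : MSys fun s t => X s * Y t :=
  fun s t t' u => h.mul_mul s t t' u

lemma XYSys.of_inj {I : Type*} [DecidableEq I] {R R' : Type*} [Ring R] [Ring R'] (f : R →+* R')
    (hf : Function.Injective f) {g : R} {X Y : I → R}
    (h : XYSys (f g) (fun i => f (X i)) (fun i => f (Y i))) : XYSys g X Y := by
  refine ⟨fun i j => hf ?_, fun i => hf ?_, fun i => hf ?_⟩
  · rw [map_mul, h.yx]; split_ifs <;> simp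
  · rw [map_mul, h.xg]
  · rw [map_mul, h.gy]

section alg
variable {A S I : Type} [Ring A] [Fintype S] [DecidableEq S] [Fintype I] [DecidableEq I]

/-- Data entering the refinement construction. -/
structure Ref (E : S → S → A) (s₀ : S) (r : I → ℕ) (f : I → A) (x y : (Σ i, Fin (r i)) → A)
    (l : I → ℕ) (g : A) (u v : ∀ i, Fin (l i) → A) : Prop where
  hE : MSys E
  yx : ∀ p q, y p * x q = if p = q then f p.1 else 0
  xf : ∀ p, x p * f p.1 = x p
  fy : ∀ p, f p.1 * y p = y p
  sum : ∑ p, x p * y p = E s₀ s₀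
  uv : ∀ i, XYSys g (u i) (v i)
  fu : ∀ i b, f i * u i b = u i b
  vf : ∀ i b, v i b * f i = v i b

variable {E : S → S → A} {s₀ : S} {r : I → ℕ} {f : I → A} {x y : (Σ i, Fin (r i)) → A}
    {l : I → ℕ} {g : A} {u v : ∀ i, Fin (l i) → A}

namespace Ref

lemma ex (h : Ref E s₀ r f x y l g u v) (p) : E s₀ s₀ * x p = x p := by
  rw [← h.sum, Finset.sum_mul]
  simp [mul_assoc, h.yx, h.xf]

lemma ye (h : Ref E s₀ r f x y l g u v) (p) : y p * E s₀ s₀ = y p := by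
  rw [← h.sum, Finset.mul_sum]
  simp [← mul_assoc, h.yx, h.fy]

lemma ff (h : Ref E s₀ r f x y l g u v) (i) (hi : 0 < r i) : f i * f i = f i := by
  have h1 := h.yx ⟨i, ⟨0, hi⟩⟩ ⟨i, ⟨0, hi⟩⟩
  simp only [if_true] at h1
  have h2 := h.xf ⟨i, ⟨0, hi⟩⟩
  simp only at h2
  nth_rw 1 [← h1]
  rw [mul_assoc, h2, h1]

end Ref

/-- structured left parts -/
def sX (E : S → S → A) (s₀ : S) (r : I → ℕ) (x : (Σ i, Fin (r i)) → A)
    (l : I → ℕ) (u : ∀ i, Fin (l i) → A) :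
    S × (Σ p : (Σ i, Fin (r i)), Fin (l p.1)) → A :=
  fun z => E z.1 s₀ * x z.2.1 * u z.2.1.1 z.2.2

/-- structured right parts -/
def sY (E : S → S → A) (s₀ : S) (r : I → ℕ) (y : (Σ i, Fin (r i)) → A)
    (l : I → ℕ) (v : ∀ i, Fin (l i) → A) :
    S × (Σ p : (Σ i, Fin (r i)), Fin (l p.1)) → A :=
  fun z => v z.2.1.1 z.2.2 * y z.2.1 * E s₀ z.1

lemma Ref.sys (h : Ref E s₀ r f x y l g u v) :
    XYSys g (sX E s₀ r x l u) (sY E s₀ r y l v) := by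
  refine ⟨?_, ?_, ?_⟩
  · rintro ⟨s, p, b⟩ ⟨t, q, c⟩
    have h1 : sY E s₀ r y l v ⟨s, p, b⟩ * sX E s₀ r x l u ⟨t, q, c⟩
        = v p.1 b * y p * (E s₀ s * E t s₀) * x q * u q.1 c := by
      simp only [sX, sY, mul_assoc]
    rw [h1, h.hE]
    by_cases hst : s = t
    · subst hst
      have h2 : v p.1 b * y p * E s₀ s₀ * x q * u q.1 c = v p.1 b * (y p * x q) * u q.1 c := by
        rw [mul_assoc (v p.1 b) (y p), h.ye, mul_assoc (v p.1 b)]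
      rw [if_pos rfl, h2, h.yx]
      by_cases hpq : p = q
      · subst hpq
        rw [if_pos rfl, h.vf, (h.uv _).yx]
        by_cases hbc : b = c
        · subst hbc
          simp
        · simp [hbc]
      · simp [hpq]
    · simp [hst]
  · rintro ⟨s, p, b⟩
    simp only [sX, mul_assoc, (h.uv _).xg]
  · rintro ⟨s, p, b⟩
    simp only [sY, ← mul_assoc, (h.uv _).gy]

variable {N : A → ℝ}

lemma Ref.corner (h : Ref E s₀ r f x y l g u v) (hN : IsPseudoRankFunction N) :
    N (E s₀ s₀ - ∑ z, sX E s₀ r x l u (s₀, z) * sY E s₀ r y l v (s₀, z))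
      = N (E s₀ s₀) - (∑ i, r i * l i : ℕ) * N g := by
  have hs := h.sys.reindex (fun z => (s₀, z)) (fun a b hab => by simpa using hab)
  rw [hN.sub_of_le]
  · rw [hs.rank_sum hN Finset.univ]
    simp [Finset.card_univ, Fintype.card_sigma, Fintype.sum_sigma]
  · rw [h.hE]; simp
  · exact hs.idem _
  · rw [Finset.mul_sum]
    apply Finset.sum_congr rfl
    intro z _
    simp only [sX, ← mul_assoc]
    rw [h.hE]; simp
  · rw [Finset.sum_mul]
    apply Finset.sum_congr rfl
    intro z _
    simp only [sY, mul_assoc]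
    rw [h.hE]; simp

/-- coarse matrix units are approximated -/
lemma Ref.coarse (h : Ref E s₀ r f x y l g u v) (hN : IsPseudoRankFunction N) (s t : S) :
    N (E s t - ∑ z, sX E s₀ r x l u (s, z) * sY E s₀ r y l v (t, z))
      ≤ N (E s₀ s₀) - (∑ i, r i * l i : ℕ) * N g := by
  rw [← h.corner hN]
  have : E s t - ∑ z, sX E s₀ r x l u (s, z) * sY E s₀ r y l v (t, z)
     = E s s₀ * (E s₀ s₀ - ∑ z, sX E s₀ r x l u (s₀, z) * sY E s₀ r y l v (s₀, z)) * E s₀ t := by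
    rw [mul_sub, sub_mul, Finset.mul_sum, Finset.sum_mul, h.hE, if_pos rfl, h.hE, if_pos rfl]
    congr 1
    apply Finset.sum_congr rfl
    intro z _
    have e1 : E s s₀ * sX E s₀ r x l u (s₀, z) = sX E s₀ r x l u (s, z) := by
      simp only [sX, ← mul_assoc]
      rw [h.hE, if_pos rfl]
    have e2 : sY E s₀ r y l v (s₀, z) * E s₀ t = sY E s₀ r y l v (t, z) := by
      simp only [sY, mul_assoc]
      rw [h.hE, if_pos rfl]
    rw [← mul_assoc, e1, mul_assoc, e2]
  rw [this]
  exact hN.sandwich_le _ _ _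

lemma Ref.fsub (h : Ref E s₀ r f x y l g u v) (hN : IsPseudoRankFunction N) (i : I)
    (hi : 0 < r i) : N (f i - ∑ b, u i b * v i b) = N (f i) - l i * N g := by
  rw [hN.sub_of_le (h.ff i hi) ((h.uv i).idem _)]
  · rw [(h.uv i).rank_sum hN]
    simp
  · rw [Finset.mul_sum]
    simp only [← mul_assoc, h.fu]
  · rw [Finset.sum_mul]
    simp only [mul_assoc, h.vf]

/-- approximating elements -/
lemma Ref.approx (h : Ref E s₀ r f x y l g u v) (hN : IsPseudoRankFunction N)
    {D : Type} [Ring D] (ι : D →+* A)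
    (hEι : ∀ d s t, ι d * E s t = E s t * ι d) (a : A)
    (δ : S → S → ∀ i, Fin (r i) → Fin (r i) → D)
    (ha : ∀ s t, E s₀ s * a * E t s₀ =
      ∑ i, ∑ p, ∑ q, ι (δ s t i p q) * (x ⟨i, p⟩ * y ⟨i, q⟩)) :
    ∃ a' ∈ AddSubgroup.closure {z | ∃ d p q, z = ι d * (sX E s₀ r x l u p * sY E s₀ r y l v q)},
      N (a - a') ≤ 2 * N (1 - ∑ s, E s s) +
        ∑ _s : S, ∑ _t : S, ∑ i, ∑ _p : Fin (r i), ∑ _q : Fin (r i), (N (f i) - l i * N g) := by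
  refine ⟨∑ s, ∑ t, ∑ i, ∑ p, ∑ q, ∑ b, ι (δ s t i p q) *
    (sX E s₀ r x l u (s, ⟨⟨i, p⟩, b⟩) * sY E s₀ r y l v (t, ⟨⟨i, q⟩, b⟩)), ?_, ?_⟩
  · refine sum_mem fun s _ => sum_mem fun t _ => sum_mem fun i _ => sum_mem fun p _ =>
      sum_mem fun q _ => sum_mem fun b _ => AddSubgroup.subset_closure ⟨_, _, _, rfl⟩
  · set P := ∑ s, E s s with hP
    have h1 : N (a - P * a * P) ≤ 2 * N (1 - P) := by
      have : a - P * a * P = (1 - P) * a + P * a * (1 - P) := by noncomm_ring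
      rw [this]
      refine (hN.subadditive _ _).trans ?_
      have e1 := hN.mul_le_left (1 - P) a
      have e2 := hN.mul_le_right (P * a) (1 - P)
      linarith
    have h2 : P * a * P = ∑ s, ∑ t, E s s₀ * (E s₀ s * a * E t s₀) * E s₀ t := by
      rw [hP, Finset.sum_mul, Finset.sum_mul]
      apply Finset.sum_congr rfl
      intro s _
      rw [Finset.mul_sum]
      apply Finset.sum_congr rfl
      intro t _
      have e1 : E s s = E s s₀ * E s₀ s := by rw [h.hE, if_pos rfl]
      have e2 : E t t = E t s₀ * E s₀ t := by rw [h.hE, if_pos rfl]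
      conv_lhs => rw [e1, e2]
      simp only [mul_assoc]
    refine (hN.tri a (P * a * P) _).trans (add_le_add h1 ?_)
    rw [h2, ← Finset.sum_sub_distrib]
    refine (hN.sum_le _ _).trans (Finset.sum_le_sum fun s _ => ?_)
    rw [← Finset.sum_sub_distrib]
    refine (hN.sum_le _ _).trans (Finset.sum_le_sum fun t _ => ?_)
    rw [ha, Finset.mul_sum, Finset.sum_mul, ← Finset.sum_sub_distrib]
    refine (hN.sum_le _ _).trans (Finset.sum_le_sum fun i _ => ?_)
    rw [Finset.mul_sum, Finset.sum_mul, ← Finset.sum_sub_distrib]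
    refine (hN.sum_le _ _).trans (Finset.sum_le_sum fun p _ => ?_)
    rw [Finset.mul_sum, Finset.sum_mul, ← Finset.sum_sub_distrib]
    refine (hN.sum_le _ _).trans (Finset.sum_le_sum fun q _ => ?_)
    rw [← h.fsub hN i p.pos]
    have : E s s₀ * (ι (δ s t i p q) * (x ⟨i, p⟩ * y ⟨i, q⟩)) * E s₀ t -
      ∑ b, ι (δ s t i p q) *
        (sX E s₀ r x l u (s, ⟨⟨i, p⟩, b⟩) * sY E s₀ r y l v (t, ⟨⟨i, q⟩, b⟩))
      = ι (δ s t i p q) * E s s₀ * x ⟨i, p⟩ * (f i - ∑ b, u i b * v i b) *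
         (y ⟨i, q⟩ * E s₀ t) := by
      rw [mul_sub, sub_mul, Finset.mul_sum, Finset.sum_mul]
      congr 1
      · rw [hEι]
        have := h.xf ⟨i, p⟩
        simp only at this
        simp only [mul_assoc]
        rw [← mul_assoc (x ⟨i, p⟩) (f i), this]
      · simp only [sX, sY, mul_assoc]
    rw [this]
    exact hN.sandwich_le _ _ _

end alg

namespace Tow
variable {D A : Type} [DivisionRing D] [Ring A] {ι : D →+* A} (T : Tow D A ι) {N : A → ℝ}

/-- a small idempotent adapted to a finite family of idempotents -/
lemma exists_g (hN : IsPseudoRankFunction N) (hAI : T.AI N)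
    (hgap : ∀ c : ℝ, 0 < c → ¬ ∀ a, N a = 0 ∨ c ≤ N a)
    {I : Type} [Fintype I] (f : I → A) (hf : ∀ i, f i * f i = f i) (n : ℕ)
    (hfn : ∀ i, f i ∈ (T.ψ n).range) (T0 : ℕ) (hT0 : 0 < T0) (l : I → ℕ)
    (hl : ∀ i, (l i : ℝ) ≤ T0 * N (f i)) (ε : ℝ) (hε : 0 < ε) :
    ∃ m, n < m ∧ ∃ (x : I → TT (Fin (T.k m + 1)) (T.n m) (Subring.center D))
      (g : TT (Fin (T.k m + 1)) (T.n m) (Subring.center D)),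
      (∀ i, T.ψ m (x i) = f i) ∧ g * g = g ∧ (∀ i j, l i * (g j).rank ≤ (x i j).rank) ∧
      (∀ j, T0 * (g j).rank ≤ T.n m j) ∧ 1 - T0 * N (T.ψ m g) < ε := by
  classical
  set η := min ε 1 / 4 with hη
  have hηpos : 0 < η := by positivity
  have hη1 : η ≤ 1 / 4 := by rw [hη]; linarith [min_le_right ε 1]
  have hηε : 4 * η ≤ ε := by rw [hη]; linarith [min_le_left ε 1]
  have hT : (0 : ℝ) < T0 := by exact_mod_cast hT0
  obtain ⟨L, hL⟩ := exists_nat_ge (T0 / η)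
  obtain ⟨m, hm, x, G, hx, hG, hj⟩ := T.good_blocks hN hAI hgap f hf n hfn L (η / T0) η
    (by positivity) hηpos
  let w : Fin (T.k m + 1) → ℕ := fun j => if j ∈ G then ⌊(1 - η) * T.n m j / T0⌋₊ else 0
  have hw1 : ∀ j, (w j : ℝ) * T0 ≤ (1 - η) * T.n m j := by
    intro j
    by_cases hjG : j ∈ G
    · simp only [w, if_pos hjG]
      rw [← le_div_iff₀ hT]
      apply Nat.floor_le
      have : 0 ≤ 1 - η := by linarith
      positivity
    · simp only [w, if_neg hjG]
      have : 0 ≤ 1 - η := by linarith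
      simp only [Nat.cast_zero, zero_mul]
      positivity
  have hw2 : ∀ j, T0 * w j ≤ T.n m j := by
    intro j
    have h1 := hw1 j
    have h2 : (0 : ℝ) ≤ T.n m j := Nat.cast_nonneg _
    have : ((T0 * w j : ℕ) : ℝ) ≤ T.n m j := by
      push_cast
      nlinarith
    exact_mod_cast this
  obtain ⟨g, hg, hgr⟩ := TT_exists_idem (K := Subring.center D) w
    (fun j => le_trans (Nat.le_mul_of_pos_left _ hT0) (hw2 j))
  refine ⟨m, hm, x, g, hx, hg, ?_, ?_, ?_⟩
  · intro i j
    rw [hgr]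
    by_cases hjG : j ∈ G
    · by_cases hli : l i = 0
      · simp [hli]
      · have hli1 : (1 : ℝ) ≤ l i := by exact_mod_cast Nat.one_le_iff_ne_zero.mpr hli
        have h1 := hl i
        have h2 := ((hj j hjG).2 i)
        rw [abs_lt] at h2
        have h3 := hw1 j
        have h4 : (0 : ℝ) ≤ T.n m j := Nat.cast_nonneg _
        have h5 : η / T0 ≤ η * N (f i) := by
          rw [div_le_iff₀ hT]
          nlinarith
        have h6 : (l i : ℝ) * w j ≤ N (f i) * ((1 - η) * T.n m j) := by
          have a1 : (l i : ℝ) * w j ≤ T0 * N (f i) * w j :=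
            mul_le_mul_of_nonneg_right h1 (Nat.cast_nonneg _)
          have a2 : N (f i) * (w j * T0) ≤ N (f i) * ((1 - η) * T.n m j) :=
            mul_le_mul_of_nonneg_left h3 (hN.nonneg _)
          nlinarith
        have h7 : ((l i * w j : ℕ) : ℝ) ≤ ((x i j).rank : ℝ) := by
          push_cast
          have := mul_le_mul_of_nonneg_right h5 h4
          nlinarith
        exact_mod_cast h7
    · simp [w, hjG]
  · intro j
    rw [hgr]
    exact hw2 j
  · rw [T.rank_formula hN m g hg]
    have h1 : ∀ j ∈ G, (1 - 2 * η) * (T.n m j * T.wt N m j) ≤ T0 * ((g j).rank * T.wt N m j) := by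
      intro j hjG
      rw [hgr]
      have h2 : (1 - η) * T.n m j / T0 < w j + 1 := by
        simp only [w, if_pos hjG]
        exact Nat.lt_floor_add_one _
      rw [div_lt_iff₀ hT] at h2
      have h3 : (T0 : ℝ) ≤ η * T.n m j := by
        have : (L : ℝ) ≤ T.n m j := by exact_mod_cast (hj j hjG).1
        have h4 := hL.trans this
        rw [div_le_iff₀ hηpos] at h4
        linarith
      have h5 := T.wt_nonneg hN m j
      have h6 : (1 - 2 * η) * T.n m j ≤ T0 * w j := by nlinarith
      nlinarith [mul_le_mul_of_nonneg_right h6 h5]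
    have h2 := Finset.sum_le_sum h1
    rw [← Finset.mul_sum, ← Finset.mul_sum] at h2
    have h3 : ∑ j ∈ G, ((g j).rank : ℝ) * T.wt N m j ≤ ∑ j, (g j).rank * T.wt N m j :=
      Finset.sum_le_sum_of_subset_of_nonneg (Finset.subset_univ _)
        (fun j _ _ => mul_nonneg (Nat.cast_nonneg _) (T.wt_nonneg hN m j))
    have h4 := mul_le_mul_of_nonneg_left h3 hT.le
    have h5 : (1 - 2 * η) * (1 - η) ≤ (1 - 2 * η) * ∑ j ∈ G, T.n m j * T.wt N m j :=
      mul_le_mul_of_nonneg_left hG.le (by linarith)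
    nlinarith

/-- The filler. -/
lemma filler (m : ℕ) {L L' : Type} [Fintype L] [DecidableEq L] [Fintype L'] [DecidableEq L']
    (g : TT (Fin (T.k m + 1)) (T.n m) (Subring.center D)) (hg : g * g = g)
    {X Y : L → A} (h : XYSys (T.ψ m g) X Y) (hX : ∀ i, X i ∈ (T.ψ m).range)
    (hY : ∀ i, Y i ∈ (T.ψ m).range)
    (hc : ∀ j, (Fintype.card L + Fintype.card L') * (g j).rank ≤ T.n m j) :
    ∃ X' Y' : L' → A, XYSys (T.ψ m g) (Sum.elim X X') (Sum.elim Y Y') ∧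
      (∀ i, X' i ∈ (T.ψ m).range) ∧ (∀ i, Y' i ∈ (T.ψ m).range) := by
  choose X₁ hX₁ using hX
  choose Y₁ hY₁ using hY
  obtain rfl : (fun i => T.ψ m (X₁ i)) = X := funext hX₁
  obtain rfl : (fun i => T.ψ m (Y₁ i)) = Y := funext hY₁
  have h1 : XYSys g X₁ Y₁ := XYSys.of_inj _ (T.ψ_inj m) h
  obtain ⟨X', Y', h2, h3, h4⟩ := TT_compare (L := L') g (1 - ∑ l, X₁ l * Y₁ l) hg
    (by
      have := h1.idem Finset.univ
      rw [mul_sub, sub_mul, sub_mul, this]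
      simp)
    (by
      intro j
      have a1 := TT_rank_compl h1 j
      have a2 := hc j
      rw [add_mul] at a2
      omega)
  refine ⟨fun i => T.ψ m (X' i), fun i => T.ψ m (Y' i), ?_, fun i => ⟨_, rfl⟩, fun i => ⟨_, rfl⟩⟩
  apply h.sum (h2.map _)
  · intro i
    have := congrArg (T.ψ m) (h3 i)
    simpa using this
  · intro i
    have := congrArg (T.ψ m) (h4 i)
    simpa using this

end Tow

namespace Tow
variable {D A : Type} [DivisionRing D] [Ring A] {ι : D →+* A} (T : Tow D A ι) {N : A → ℝ}

/-- numeric estimate for coarse units -/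
lemma num_coarse {ne ng ε W T0 σ M R def0 sr : ℝ} (hσ : 1 ≤ σ) (hT : T0 = σ * M) (hM : 0 < M)
    (hdef : σ * ne = 1 - def0) (hng : T0 * ng ≤ 1) (hng2 : 1 - T0 * ng < ε / (4 * W))
    (hdef0 : 0 ≤ def0) (hne1 : ne ≤ 1) (hng0 : 0 ≤ ng) (hε : 0 < ε)
    (hR : T0 * ne - sr ≤ R) (hW : 1 + 2 * sr ≤ W) (hsr : 0 ≤ sr) (hTW : 4 * W ≤ ε * T0) :
    ne - R * ng + (M - R) * ng ≤ 2 * def0 + ε := by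
  have hW0 : 0 < W := by linarith
  have hT0 : 0 < T0 := by rw [hT]; positivity
  have h1 : M * ng ≤ ne + def0 := by
    have : σ * (M * ng) ≤ σ * (ne + def0) := by
      have : σ * (M * ng) = T0 * ng := by rw [hT]; ring
      rw [this]
      nlinarith
    exact le_of_mul_le_mul_left this (by linarith)
  have h2 : (T0 * ne - sr) * ng ≤ R * ng := mul_le_mul_of_nonneg_right hR hng0
  have h3 : ε / (4 * W) ≤ ε / 4 := by
    apply div_le_div_of_nonneg_left hε.le (by norm_num) (by linarith)
  have h4 : sr * ng ≤ ε / 8 := by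
    have a1 : sr * ng * T0 ≤ ε / 8 * T0 := by
      have : sr * (T0 * ng) ≤ sr * 1 := mul_le_mul_of_nonneg_left hng hsr
      nlinarith
    exact le_of_mul_le_mul_right a1 hT0
  have h5 : ne * (1 - T0 * ng) ≤ 1 * (ε / 4) := by
    apply mul_le_mul hne1 (by linarith) (by linarith) (by norm_num)
  nlinarith

lemma theta_inj {S M R C : Type} (Φ : M ≃ R ⊕ C) : Function.Injective
    (fun z : S × M => (Sum.map (fun a => (z.1, a)) (fun a => (z.1, a)) (Φ z.2) :
      (S × R) ⊕ (S × C))) := by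
  rintro ⟨s, z⟩ ⟨t, w⟩ h
  have : s = t ∧ Φ z = Φ w := by
    revert h
    simp only
    generalize Φ z = a
    generalize Φ w = b
    rcases a with a | a <;> rcases b with b | b <;> simp
  rw [this.1, Φ.injective this.2]

set_option maxHeartbeats 1000000 in
open Classical in
/-- One refinement step. -/
lemma step (hN : IsPseudoRankFunction N) (hAI : T.AI N)
    (hgap : ∀ c : ℝ, 0 < c → ¬ ∀ a, N a = 0 ∨ c ≤ N a)
    {S : Type} [Fintype S] [DecidableEq S] [Nonempty S] (E : S → S → A) (hE : MSys E) (n : ℕ)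
    (hEn : ∀ s t, E s t ∈ (T.ψ n).range) (ε : ℝ) (hε : 0 < ε) :
    ∃ l : ℕ, 1 ≤ l ∧ ∀ ε' : ℝ, 0 < ε' → ∃ m, n < m ∧
      ∃ F : S × Fin (2 ^ l) → S × Fin (2 ^ l) → A, MSys F ∧
        (∀ p q, F p q ∈ (T.ψ m).range) ∧ N (1 - ∑ p, F p p) < ε' ∧
        (∀ s t, N (E s t - ∑ z, F (s, z) (t, z)) ≤ 2 * N (1 - ∑ s, E s s) + ε) ∧
        ∀ a ∈ (T.Ψ n).range, ∃ a' ∈ AddSubgroup.closure {z | ∃ d p q, z = ι d * F p q},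
          N (a - a') ≤ 2 * N (1 - ∑ s, E s s) + ε := by
  obtain ⟨s₀⟩ := ‹Nonempty S›
  obtain ⟨e, he⟩ := hEn s₀ s₀
  have hee : e * e = e := by
    apply T.ψ_inj n
    rw [map_mul, he, hE, if_pos rfl]
  let r : Fin (T.k n + 1) → ℕ := fun j => (e j).rank
  obtain ⟨x, y, hyx, hxf, hfy, hsum, hdec⟩ := TT_decomp (T.hn n) e hee r (fun _ => rfl)
  let f : Fin (T.k n + 1) → A := fun j => T.ψ n (cell j ⟨0, T.hn n j⟩ ⟨0, T.hn n j⟩ 1)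
  have hff : ∀ i, f i * f i = f i := by
    intro i
    simp only [f]
    rw [← map_mul]
    congr 1
    simp [cell, ← Pi.single_mul]
  have hfr : ∑ i, r i * N (f i) = N (E s₀ s₀) := by
    rw [← he, T.rank_formula hN n e hee]
    rfl
  -- constants
  set σ := Fintype.card S with hσ
  have hσ1 : 1 ≤ σ := Fintype.card_pos_iff.mpr ⟨s₀⟩
  let sr : ℕ := ∑ i, r i
  let sr2 : ℕ := ∑ i, r i * r i
  let W : ℕ := 1 + 2 * sr + σ * σ * sr2
  obtain ⟨l, hl⟩ := exists_nat_ge (4 * (W : ℝ) / ε)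
  refine ⟨l + 1, by omega, fun ε' hε' => ?_⟩
  set M : ℕ := 2 ^ (l + 1) with hM
  set T0 : ℕ := σ * M with hT0
  have hMpos : 0 < M := by positivity
  have hT0pos : 0 < T0 := by positivity
  have hWpos : (0 : ℝ) < W := by
    have : 0 < W := by omega
    exact_mod_cast this
  have hTW : 4 * (W : ℝ) ≤ ε * T0 := by
    rw [div_le_iff₀ hε] at hl
    have h1 : l ≤ T0 := by
      have a1 : l + 1 < M := Nat.lt_two_pow_self
      have a2 : M ≤ T0 := Nat.le_mul_of_pos_left _ hσ1
      omega
    have h2 : (l : ℝ) ≤ T0 := by exact_mod_cast h1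
    nlinarith
  let li : Fin (T.k n + 1) → ℕ := fun i => ⌊(T0 : ℝ) * N (f i)⌋₊
  have hli : ∀ i, (li i : ℝ) ≤ T0 * N (f i) := fun i =>
    Nat.floor_le (mul_nonneg (Nat.cast_nonneg _) (hN.nonneg _))
  have hli' : ∀ i, T0 * N (f i) - 1 ≤ li i := fun i => (Nat.sub_one_lt_floor _).le
  obtain ⟨m, hnm, xf, g, hxfm, hg, hgf, hgn, hgN⟩ := T.exists_g hN hAI hgap f hff n
    (fun i => ⟨_, rfl⟩) T0 hT0pos li hli (min ε' (ε / (4 * W))) (by positivity)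
  have hxfi : ∀ i, xf i * xf i = xf i := by
    intro i
    apply T.ψ_inj m
    rw [map_mul, hxfm, hff]
  choose u v huv hfu hvf using fun i => TT_compare (L := Fin (li i)) g (xf i) hg (hxfi i)
    (by intro j; rw [Fintype.card_fin]; exact hgf i j)
  have href : Ref E s₀ r f (fun p => T.ψ n (x p)) (fun p => T.ψ n (y p)) li (T.ψ m g)
      (fun i b => T.ψ m (u i b)) (fun i b => T.ψ m (v i b)) := by
    refine ⟨hE, ?_, ?_, ?_, ?_, fun i => (huv i).map _, ?_, ?_⟩
    · intro p q
      rw [← map_mul, hyx]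
      split_ifs
      · rfl
      · simp
    · intro p
      simp only [f]
      rw [← map_mul, hxf]
    · intro p
      simp only [f]
      rw [← map_mul, hfy]
    · rw [← he, ← hsum, map_sum]
      simp
    · intro i b
      rw [← hxfm, ← map_mul, hfu]
    · intro i b
      rw [← hxfm, ← map_mul, hvf]
  have hmono : ∀ a, a ∈ (T.ψ n).range → a ∈ (T.ψ m).range := fun a ha => T.ψ_mono hnm.le ha
  have hdef : σ * N (E s₀ s₀) = 1 - N (1 - ∑ s, E s s) := by
    have horth : ∀ s t, E s s * E t t = if s = t then E s s else 0 := by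
      intro s t
      rw [hE]
      split_ifs with hst
      · rw [hst]
      · rfl
    rw [hN.one_sub (orth_sum_mul _ _ horth), orth_sum_rank hN _ _ horth]
    have : ∀ s, N (E s s) = N (E s₀ s₀) := by
      intro s
      have h1 : E s s₀ * E s₀ s = E s s := by rw [hE, if_pos rfl]
      rw [← h1]
      apply hN.eqv
      · rw [hE, if_pos rfl]
      · rw [hE, if_pos rfl]
    simp [this, hσ]
  let R : ℕ := ∑ i, r i * li i
  have hRle : (R : ℝ) ≤ T0 * N (E s₀ s₀) := by
    rw [← hfr, Finset.mul_sum]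
    simp only [R]
    push_cast
    apply Finset.sum_le_sum
    intro i _
    have := mul_le_mul_of_nonneg_left (hli i) (Nat.cast_nonneg (α := ℝ) (r i))
    linarith
  have hRge : T0 * N (E s₀ s₀) - sr ≤ R := by
    rw [← hfr, Finset.mul_sum]
    simp only [R, sr]
    push_cast
    rw [← Finset.sum_sub_distrib]
    apply Finset.sum_le_sum
    intro i _
    have := mul_le_mul_of_nonneg_left (hli' i) (Nat.cast_nonneg (α := ℝ) (r i))
    linarith
  have hRM : R ≤ M := by
    have h1 : (R : ℝ) ≤ M := by
      refine hRle.trans ?_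
      rw [hT0]
      push_cast
      have h2 : (σ : ℝ) * N (E s₀ s₀) ≤ 1 := by rw [hdef]; linarith [hN.nonneg (1 - ∑ s, E s s)]
      have h3 : (0 : ℝ) ≤ M := Nat.cast_nonneg _
      nlinarith
    exact_mod_cast h1
  have hsys := href.sys
  have hcardR : Fintype.card (Σ p : (Σ i, Fin (r i)), Fin (li p.1)) = R := by
    simp [Fintype.card_sigma, Fintype.sum_sigma, R]
  obtain ⟨X', Y', hXY, hX', hY'⟩ := T.filler m (L' := S × Fin (M - R)) g hg hsys
    (fun z => mul_mem (mul_mem (hmono _ (hEn _ _)) (hmono _ ⟨_, rfl⟩)) ⟨_, rfl⟩)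
    (fun z => mul_mem (mul_mem ⟨_, rfl⟩ (hmono _ ⟨_, rfl⟩)) (hmono _ (hEn _ _)))
    (by
      intro j
      rw [Fintype.card_prod, Fintype.card_prod, hcardR, Fintype.card_fin, ← mul_add,
        Nat.add_sub_cancel' hRM]
      exact hgn j)
  let Φ : Fin M ≃ (Σ p : (Σ i, Fin (r i)), Fin (li p.1)) ⊕ Fin (M - R) :=
    Fintype.equivOfCardEq (by
      rw [Fintype.card_sum, hcardR, Fintype.card_fin, Fintype.card_fin]; omega)
  let Θ : S × Fin M → (S × (Σ p : (Σ i, Fin (r i)), Fin (li p.1))) ⊕ (S × Fin (M - R)) :=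
    fun z => Sum.map (fun a => (z.1, a)) (fun a => (z.1, a)) (Φ z.2)
  have hΘ : Function.Injective Θ := theta_inj Φ
  have hfin := hXY.reindex Θ hΘ
  set Xf := sX E s₀ r (fun p => T.ψ n (x p)) li (fun i b => T.ψ m (u i b)) with hXf
  set Yf := sY E s₀ r (fun p => T.ψ n (y p)) li (fun i b => T.ψ m (v i b)) with hYf
  have hng0 := hN.nonneg (T.ψ m g)
  have hsumN := hfin.rank_sum hN Finset.univ
  rw [Finset.card_univ, Fintype.card_prod, Fintype.card_fin] at hsumN
  have hT0R : (((Fintype.card S * M : ℕ)) : ℝ) = (T0 : ℝ) := by rw [hT0]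
  rw [hT0R] at hsumN
  have hng1 : T0 * N (T.ψ m g) ≤ 1 := by rw [← hsumN]; exact hN.le_one _
  have hgN1 := lt_of_lt_of_le hgN (min_le_left _ _)
  have hgN2 := lt_of_lt_of_le hgN (min_le_right _ _)
  refine ⟨m, hnm, _, hfin.msys, ?_, ?_, ?_, ?_⟩
  · have hXe : ∀ z, Sum.elim Xf X' z ∈ (T.ψ m).range := by
      rintro (z | z)
      · exact mul_mem (mul_mem (hmono _ (hEn _ _)) (hmono _ ⟨_, rfl⟩)) ⟨_, rfl⟩
      · exact hX' z
    have hYe : ∀ z, Sum.elim Yf Y' z ∈ (T.ψ m).range := by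
      rintro (z | z)
      · exact mul_mem (mul_mem ⟨_, rfl⟩ (hmono _ ⟨_, rfl⟩)) (hmono _ (hEn _ _))
      · exact hY' z
    intro p q
    exact mul_mem (hXe _) (hYe _)
  · rw [hN.one_sub (hfin.idem _), hsumN]
    exact hgN1
  · intro s t
    have h1 : ∑ z, Sum.elim Xf X' (Θ (s, z)) * Sum.elim Yf Y' (Θ (t, z))
        = ∑ z, Xf (s, z) * Yf (t, z) + ∑ z, X' (s, z) * Y' (t, z) := by
      exact (Φ.sum_comp (fun w =>
        Sum.elim Xf X' (Sum.map (fun a => (s, a)) (fun a => (s, a)) w) *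
        Sum.elim Yf Y' (Sum.map (fun a => (t, a)) (fun a => (t, a)) w))).trans
        (Fintype.sum_sum_type _)
    have h2 : N (∑ z, X' (s, z) * Y' (t, z)) ≤ (M - R : ℕ) * N (T.ψ m g) := by
      refine (hN.sum_le _ _).trans ?_
      have : ∀ z ∈ (Finset.univ : Finset (Fin (M - R))),
          N (X' (s, z) * Y' (t, z)) ≤ N (T.ψ m g) := fun z _ =>
        hXY.rank_le hN (Sum.inr (s, z)) (Sum.inr (t, z))
      refine (Finset.sum_le_sum this).trans ?_
      simp
    have h3 := href.coarse hN s t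
    rw [h1, ← sub_sub]
    refine (hN.sub_le _ _).trans ((add_le_add h3 h2).trans ?_)
    rw [Nat.cast_sub hRM]
    have hT0R : (T0 : ℝ) = σ * M := by rw [hT0]; push_cast; rfl
    apply num_coarse (W := W) (sr := sr) (by exact_mod_cast hσ1) hT0R (by exact_mod_cast hMpos)
      hdef hng1 hgN2 (hN.nonneg _) (hN.le_one _) hng0 hε hRge ?_
      (Nat.cast_nonneg _) hTW
    have : 1 + 2 * sr ≤ W := Nat.le_add_right _ _
    exact_mod_cast this
  · rintro _ ⟨a, rfl⟩
    choose el hel using hEn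
    choose δ hδ using fun s t => hdec D (rho D) rho_comm
      (TTmap (rho D) (el s₀ s) * a * TTmap (rho D) (el t s₀))
    obtain ⟨a', ha', hNa'⟩ := href.approx hN ι (fun d s t => by
        rw [← hel s t]; exact T.ψ_comm n _ d) (T.Ψ n a) δ (by
      intro s t
      have h1 := congrArg (T.Ψ n) (hδ s t)
      simp only [map_mul, map_sum, ← T.ψ_apply, hel, T.scalΨ, he] at h1
      rw [← h1]
      have e1 : E s₀ s₀ * E s₀ s = E s₀ s := by rw [hE, if_pos rfl]
      have e2 : E t s₀ * E s₀ s₀ = E t s₀ := by rw [hE, if_pos rfl]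
      conv_lhs => rw [← e1, ← e2]
      simp only [mul_assoc])
    refine ⟨a', ?_, hNa'.trans ?_⟩
    · refine AddSubgroup.closure_mono ?_ ha'
      rintro _ ⟨d, p, q, rfl⟩
      refine ⟨d, (p.1, Φ.symm (Sum.inl p.2)), (q.1, Φ.symm (Sum.inl q.2)), ?_⟩
      have e1 : Θ (p.1, Φ.symm (Sum.inl p.2)) = Sum.inl p := by
        simp only [Θ, Equiv.apply_symm_apply]
        rfl
      have e2 : Θ (q.1, Φ.symm (Sum.inl q.2)) = Sum.inl q := by
        simp only [Θ, Equiv.apply_symm_apply]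
        rfl
      beta_reduce
      rw [e1, e2]
      rfl
    · have h1 : ∀ i, N (f i) - li i * N (T.ψ m g) ≤ ε / (2 * W) := by
        intro i
        have h2 := mul_le_mul_of_nonneg_right (hli' i) hng0
        have h3 : N (f i) * (1 - T0 * N (T.ψ m g)) ≤ 1 * (ε / (4 * W)) :=
          mul_le_mul (hN.le_one _) hgN2.le (by linarith) (by norm_num)
        have h4 : N (T.ψ m g) ≤ ε / (4 * W) := by
          rw [le_div_iff₀ (by positivity)]
          nlinarith
        have h5 : ε / (2 * W) = ε / (4 * W) + ε / (4 * W) := by field_simp; norm_num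
        nlinarith
      have h2 : ∑ _s : S, ∑ _t : S, ∑ i, ∑ _p : Fin (r i), ∑ _q : Fin (r i),
          (N (f i) - li i * N (T.ψ m g)) ≤ (σ * σ * sr2 : ℕ) * (ε / (2 * W)) := by
        refine (Finset.sum_le_sum fun s _ => Finset.sum_le_sum fun t _ =>
          Finset.sum_le_sum fun i _ => Finset.sum_le_sum fun p _ =>
          Finset.sum_le_sum fun q _ => h1 i).trans (le_of_eq ?_)
        simp only [Finset.sum_const, Finset.card_univ, Fintype.card_fin, nsmul_eq_mul, sr2, ← hσ]
        push_cast
        simp only [Finset.mul_sum, Finset.sum_mul]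
        apply Finset.sum_congr rfl
        intro i _
        ring
      have h3 : ((σ * σ * sr2 : ℕ) : ℝ) ≤ W := by
        have : σ * σ * sr2 ≤ W := Nat.le_add_left _ _
        exact_mod_cast this
      have h4 : ((σ * σ * sr2 : ℕ) : ℝ) * (ε / (2 * W)) ≤ ε := by
        have : ((σ * σ * sr2 : ℕ) : ℝ) * (ε / (2 * W)) ≤ W * (ε / (2 * W)) :=
          mul_le_mul_of_nonneg_right h3 (by positivity)
        have h6 : (W : ℝ) * (ε / (2 * W)) = ε / 2 := by field_simp
        linarith
      linarith

end Tow

/-! ### Stages indexed by natural numbers -/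

lemma sum_range_mul_split {A : Type*} [AddCommMonoid A] (a b : ℕ) (F : ℕ → A) :
    ∑ x ∈ Finset.range (a * b), F x
      = ∑ r ∈ Finset.range a, ∑ z ∈ Finset.range b, F (r + a * z) := by
  induction b with
  | zero => simp
  | succ b ih =>
    rw [Nat.mul_succ, Finset.sum_range_add, ih, ← Finset.sum_add_distrib]
    apply Finset.sum_congr rfl
    intro r _
    rw [Finset.sum_range_succ, add_comm (a * b) r]

/-- Sum along the diagonal embedding. -/
def coarse {A : Type} [Ring A] (κ K : ℕ) (E : ℕ → ℕ → A) (s t : ℕ) : A :=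
  ∑ r ∈ Finset.range (2 ^ (K - κ)), E (s + 2 ^ κ * r) (t + 2 ^ κ * r)

/-- matrix units with natural number indices -/
def NSys {A : Type} [Ring A] (k : ℕ) (E : ℕ → ℕ → A) : Prop :=
  ∀ s t t' u, s < 2 ^ k → t < 2 ^ k → t' < 2 ^ k → u < 2 ^ k →
    E s t * E t' u = if t = t' then E s u else 0

section coarse
variable {A : Type} [Ring A]

lemma two_pow_split {κ K : ℕ} (h : κ ≤ K) : 2 ^ K = 2 ^ κ * 2 ^ (K - κ) := by
  rw [← pow_add, Nat.add_sub_cancel' h]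

lemma idx_lt {κ K s r : ℕ} (h : κ ≤ K) (hs : s < 2 ^ κ) (hr : r < 2 ^ (K - κ)) :
    s + 2 ^ κ * r < 2 ^ K := by
  rw [two_pow_split h]
  calc s + 2 ^ κ * r < 2 ^ κ + 2 ^ κ * r := by omega
    _ = 2 ^ κ * (r + 1) := by ring
    _ ≤ _ := Nat.mul_le_mul_left _ hr

lemma coarse_self (k : ℕ) (E : ℕ → ℕ → A) (s t : ℕ) : coarse k k E s t = E s t := by
  simp [coarse]

lemma coarse_comp {κ k K : ℕ} (h1 : κ ≤ k) (h2 : k ≤ K) (E : ℕ → ℕ → A) (s t : ℕ) :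
    coarse κ k (coarse k K E) s t = coarse κ K E s t := by
  unfold coarse
  have : 2 ^ (K - κ) = 2 ^ (k - κ) * 2 ^ (K - k) := by
    rw [← pow_add]; congr 1; omega
  rw [this, sum_range_mul_split]
  apply Finset.sum_congr rfl
  intro r _
  apply Finset.sum_congr rfl
  intro z _
  have h3 : 2 ^ k = 2 ^ κ * 2 ^ (k - κ) := two_pow_split h1
  congr 1 <;> · rw [h3]; ring

lemma coarse_sub (κ K : ℕ) (E F : ℕ → ℕ → A) (s t : ℕ) :
    coarse κ K E s t - coarse κ K F s t = coarse κ K (fun s t => E s t - F s t) s t := by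
  simp [coarse]

lemma coarse_trace {κ K : ℕ} (h : κ ≤ K) (E : ℕ → ℕ → A) :
    ∑ s ∈ Finset.range (2 ^ κ), coarse κ K E s s = ∑ p ∈ Finset.range (2 ^ K), E p p := by
  rw [two_pow_split h, sum_range_mul_split]
  rfl

lemma NSys.coarse {κ K : ℕ} (h : κ ≤ K) {E : ℕ → ℕ → A} (hE : NSys K E) :
    NSys κ (coarse κ K E) := by
  intro s t t' u hs ht ht' hu
  unfold AraClaramunt.coarse
  rw [Finset.sum_mul_sum]
  have key : ∀ r ∈ Finset.range (2 ^ (K - κ)), ∀ z ∈ Finset.range (2 ^ (K - κ)),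
      E (s + 2 ^ κ * r) (t + 2 ^ κ * r) * E (t' + 2 ^ κ * z) (u + 2 ^ κ * z)
      = if r = z then (if t = t' then E (s + 2 ^ κ * r) (u + 2 ^ κ * r) else 0) else 0 := by
    intro r hr z hz
    rw [Finset.mem_range] at hr hz
    rw [hE _ _ _ _ (idx_lt h hs hr) (idx_lt h ht hr) (idx_lt h ht' hz) (idx_lt h hu hz)]
    by_cases hrz : r = z
    · subst hrz
      simp
    · rw [if_neg hrz, if_neg]
      intro heq
      apply hrz
      have h1 := congrArg (· / 2 ^ κ) heq
      simp only [Nat.add_mul_div_left _ _ (Nat.two_pow_pos κ), Nat.div_eq_of_lt ht,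
        Nat.div_eq_of_lt ht'] at h1
      omega
  rw [Finset.sum_congr rfl fun r hr => Finset.sum_congr rfl fun z hz => key r hr z hz]
  by_cases htt : t = t'
  · simp only [htt, if_true]
    apply Finset.sum_congr rfl
    intro r hr
    rw [Finset.sum_ite_eq]
    simp only [hr, if_true]
  · simp [htt]

lemma coarse_norm {N : A → ℝ} (hN : IsPseudoRankFunction N) {κ K : ℕ} (h : κ ≤ K)
    (E : ℕ → ℕ → A) (C : ℝ) (hE : ∀ s t, s < 2 ^ K → t < 2 ^ K → N (E s t) ≤ C) (s t : ℕ)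
    (hs : s < 2 ^ κ) (ht : t < 2 ^ κ) : N (coarse κ K E s t) ≤ 2 ^ (K - κ) * C := by
  unfold coarse
  refine (hN.sum_le _ _).trans ?_
  refine (Finset.sum_le_sum (g := fun _ => C) fun r hr => ?_).trans (le_of_eq ?_)
  · rw [Finset.mem_range] at hr
    exact hE _ _ (idx_lt h hs hr) (idx_lt h ht hr)
  · simp

end coarse

lemma closure_coeff {D A P : Type} [Ring D] [Ring A] [Fintype P] (ι : D →+* A) (F : P → P → A)
    (a : A) (ha : a ∈ AddSubgroup.closure {z | ∃ d p q, z = ι d * F p q}) :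
    ∃ d : P → P → D, a = ∑ p, ∑ q, ι (d p q) * F p q := by
  classical
  induction ha using AddSubgroup.closure_induction with
  | mem z hz =>
    obtain ⟨d, p, q, rfl⟩ := hz
    refine ⟨fun p' q' => if p' = p then (if q' = q then d else 0) else 0, ?_⟩
    rw [Finset.sum_eq_single p, Finset.sum_eq_single q]
    · simp
    · intro b _ hb; simp [hb]
    · simp
    · intro b _ hb; simp [hb]
    · simp
  | zero => exact ⟨fun _ _ => 0, by simp⟩
  | add x y _ _ hx hy =>
    obtain ⟨d, rfl⟩ := hx
    obtain ⟨d', rfl⟩ := hy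
    refine ⟨fun p q => d p q + d' p q, ?_⟩
    simp [add_mul, Finset.sum_add_distrib]
  | neg x _ hx =>
    obtain ⟨d, rfl⟩ := hx
    exact ⟨fun p q => - d p q, by simp⟩

namespace Tow
variable {D A : Type} [DivisionRing D] [Ring A] {ι : D →+* A} (T : Tow D A ι) {N : A → ℝ}

/-- A stage of the construction. -/
structure Stg (N : A → ℝ) where
  k : ℕ
  n : ℕ
  E : ℕ → ℕ → A
  sys : NSys k E
  mem : ∀ s t, E s t ∈ (T.ψ n).range
  dfct : N (1 - ∑ p ∈ Finset.range (2 ^ k), E p p) ≤ (1 / 8) ^ k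

/-- The relation between consecutive stages. -/
structure Stg.Rel {T : Tow D A ι} (U V : T.Stg N) : Prop where
  k_lt : U.k < V.k
  n_lt : U.n < V.n
  close : ∀ s t, s < 2 ^ U.k → t < 2 ^ U.k →
    N (U.E s t - coarse U.k V.k V.E s t) ≤ 3 * (1 / 8) ^ U.k
  approx : ∀ a ∈ (T.Ψ U.n).range, ∃ d : ℕ → ℕ → D,
    N (a - ∑ p ∈ Finset.range (2 ^ V.k), ∑ q ∈ Finset.range (2 ^ V.k), ι (d p q) * V.E p q)
      ≤ 3 * (1 / 8) ^ U.k

lemma Stg.next (hN : IsPseudoRankFunction N) (hAI : T.AI N)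
    (hgap : ∀ c : ℝ, 0 < c → ¬ ∀ a, N a = 0 ∨ c ≤ N a) (U : T.Stg N) :
    ∃ V : T.Stg N, U.Rel V := by
  classical
  have hpos : 0 < 2 ^ U.k := Nat.two_pow_pos _
  have : Nonempty (Fin (2 ^ U.k)) := ⟨⟨0, hpos⟩⟩
  obtain ⟨l, hl, hstep⟩ := T.step hN hAI hgap (S := Fin (2 ^ U.k)) (fun s t => U.E s t)
    (by
      intro s t t' u
      rw [U.sys _ _ _ _ s.2 t.2 t'.2 u.2]
      simp [Fin.ext_iff]) U.n (fun s t => U.mem _ _) ((1 / 8) ^ U.k) (by positivity)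
  obtain ⟨m, hm, F, hF, hFm, hFd, hFc, hFa⟩ := hstep ((1 / 8) ^ (U.k + l)) (by positivity)
  have hlpos : 0 < 2 ^ l := Nat.two_pow_pos _
  let dec : ℕ → Fin (2 ^ U.k) × Fin (2 ^ l) := fun p =>
    (⟨p % 2 ^ U.k, Nat.mod_lt _ hpos⟩, ⟨p / 2 ^ U.k % 2 ^ l, Nat.mod_lt _ hlpos⟩)
  have hdec : ∀ (s : Fin (2 ^ U.k)) (z : Fin (2 ^ l)), dec (s + 2 ^ U.k * z) = (s, z) := by
    intro s z
    simp only [dec, Prod.mk.injEq, Fin.ext_iff]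
    constructor
    · rw [Nat.add_mul_mod_self_left, Nat.mod_eq_of_lt s.2]
    · rw [Nat.add_mul_div_left _ _ hpos, Nat.div_eq_of_lt s.2, zero_add, Nat.mod_eq_of_lt z.2]
  have hdinj : ∀ p q, p < 2 ^ (U.k + l) → q < 2 ^ (U.k + l) → dec p = dec q → p = q := by
    intro p q hp hq h
    simp only [dec, Prod.mk.injEq, Fin.ext_iff] at h
    rw [pow_add] at hp hq
    have h1 := Nat.div_lt_of_lt_mul hp
    have h2 := Nat.div_lt_of_lt_mul hq
    rw [Nat.mod_eq_of_lt h1, Nat.mod_eq_of_lt h2] at h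
    rw [← Nat.mod_add_div p (2 ^ U.k), ← Nat.mod_add_div q (2 ^ U.k), h.1, h.2]
  have hsumdec : ∀ (f : Fin (2 ^ U.k) × Fin (2 ^ l) → A),
      ∑ p ∈ Finset.range (2 ^ (U.k + l)), f (dec p) = ∑ z, f z := by
    intro f
    rw [pow_add, sum_range_mul_split, Fintype.sum_prod_type, Finset.sum_range]
    apply Finset.sum_congr rfl
    intro s _
    rw [Finset.sum_range]
    apply Finset.sum_congr rfl
    intro z _
    rw [hdec]
  have hdef0 : N (1 - ∑ s : Fin (2 ^ U.k), U.E s s) ≤ (1 / 8) ^ U.k := by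
    have := U.dfct
    rwa [Finset.sum_range] at this
  refine ⟨⟨U.k + l, m, fun p q => F (dec p) (dec q), ?_, fun s t => hFm _ _, ?_⟩, ?_, hm, ?_, ?_⟩
  · intro s t t' u hs ht ht' hu
    rw [hF]
    by_cases htt : t = t'
    · simp [htt]
    · rw [if_neg htt, if_neg]
      intro h
      exact htt (hdinj _ _ ht ht' h)
  · rw [hsumdec (fun z => F z z)]
    exact hFd.le
  · simp only
    omega
  · intro s t hs ht
    have h1 : coarse U.k (U.k + l) (fun p q => F (dec p) (dec q)) s t
        = ∑ z, F (⟨s, hs⟩, z) (⟨t, ht⟩, z) := by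
      unfold coarse
      rw [Nat.add_sub_cancel_left, Finset.sum_range]
      apply Finset.sum_congr rfl
      intro z _
      have e1 := hdec ⟨s, hs⟩ z
      have e2 := hdec ⟨t, ht⟩ z
      simp only at e1 e2
      beta_reduce
      rw [e1, e2]
    simp only
    rw [h1]
    have := hFc ⟨s, hs⟩ ⟨t, ht⟩
    simp only at this
    linarith
  · intro a ha
    obtain ⟨a', ha', hNa⟩ := hFa a ha
    obtain ⟨d, rfl⟩ := closure_coeff ι F a' ha'
    refine ⟨fun p q => d (dec p) (dec q), ?_⟩
    simp only
    have h2 : ∑ p ∈ Finset.range (2 ^ (U.k + l)), ∑ q ∈ Finset.range (2 ^ (U.k + l)),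
        ι (d (dec p) (dec q)) * F (dec p) (dec q) = ∑ p, ∑ q, ι (d p q) * F p q := by
      rw [hsumdec (fun p => ∑ q ∈ Finset.range (2 ^ (U.k + l)), ι (d p (dec q)) * F p (dec q))]
      apply Finset.sum_congr rfl
      intro p _
      exact hsumdec (fun q => ι (d p q) * F p q)
    rw [h2]
    linarith

/-- The initial stage. -/
lemma Stg.nonempty (hN : IsPseudoRankFunction N) : Nonempty (T.Stg N) := by
  refine ⟨⟨0, 0, fun _ _ => 1, ?_, fun _ _ => one_mem _, ?_⟩⟩
  · intro s t t' u hs ht ht' hu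
    have : t = t' := by simp at ht ht'; omega
    simp [this]
  · simp [hN.map_zero]

/-- The sequence of stages. -/
lemma exists_stages (hN : IsPseudoRankFunction N) (hAI : T.AI N)
    (hgap : ∀ c : ℝ, 0 < c → ¬ ∀ a, N a = 0 ∨ c ≤ N a) :
    ∃ U : ℕ → T.Stg N, ∀ j, (U j).Rel (U (j + 1)) := by
  choose nx hnx using fun U : T.Stg N => Stg.next T hN hAI hgap U
  obtain ⟨U₀⟩ := Stg.nonempty T hN
  exact ⟨fun j => Nat.rec U₀ (fun _ V => nx V) j, fun j => hnx _⟩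

end Tow

/-! ### Limits in the completion -/

/-- convergence in rank -/
def RLim {Q : Type} [Ring Q] (NQ : Q → ℝ) (u : ℕ → Q) (x : Q) : Prop :=
  Filter.Tendsto (fun j => NQ (u j - x)) Filter.atTop (nhds 0)

section RLim
variable {Q : Type} [Ring Q] {NQ : Q → ℝ}

lemma RLim.of_le (hN : IsPseudoRankFunction NQ) {u : ℕ → Q} {x : Q} (b : ℕ → ℝ)
    (hb : Filter.Tendsto b Filter.atTop (nhds 0))
    (h : ∀ᶠ j in Filter.atTop, NQ (u j - x) ≤ b j) : RLim NQ u x :=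
  tendsto_of_tendsto_of_tendsto_of_le_of_le' tendsto_const_nhds hb
    (Filter.Eventually.of_forall fun j => hN.nonneg _) h

lemma RLim.const (hN : IsPseudoRankFunction NQ) (x : Q) : RLim NQ (fun _ => x) x := by
  simp [RLim, hN.map_zero]

lemma RLim.congr {u v : ℕ → Q} {x : Q} (h : RLim NQ u x) (huv : u =ᶠ[Filter.atTop] v) :
    RLim NQ v x := by
  refine Filter.Tendsto.congr' ?_ h
  filter_upwards [huv] with j hj
  rw [hj]

lemma RLim.add (hN : IsPseudoRankFunction NQ) {u v : ℕ → Q} {x y : Q} (hu : RLim NQ u x)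
    (hv : RLim NQ v y) : RLim NQ (fun j => u j + v j) (x + y) := by
  refine RLim.of_le hN (fun j => NQ (u j - x) + NQ (v j - y)) (by simpa using Filter.Tendsto.add hu hv)
    (Filter.Eventually.of_forall fun j => ?_)
  have : u j + v j - (x + y) = (u j - x) + (v j - y) := by abel
  rw [this]
  exact hN.subadditive _ _

lemma RLim.mul (hN : IsPseudoRankFunction NQ) {u v : ℕ → Q} {x y : Q} (hu : RLim NQ u x)
    (hv : RLim NQ v y) : RLim NQ (fun j => u j * v j) (x * y) := by
  refine RLim.of_le hN (fun j => NQ (u j - x) + NQ (v j - y)) (by simpa using Filter.Tendsto.add hu hv)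
    (Filter.Eventually.of_forall fun j => ?_)
  have : u j * v j - x * y = (u j - x) * v j + x * (v j - y) := by noncomm_ring
  rw [this]
  exact (hN.subadditive _ _).trans (add_le_add (hN.mul_le_left _ _) (hN.mul_le_right _ _))

lemma RLim.sum (hN : IsPseudoRankFunction NQ) {I : Type} (s : Finset I) {u : I → ℕ → Q} {x : I → Q}
    (hu : ∀ i ∈ s, RLim NQ (u i) (x i)) :
    RLim NQ (fun j => ∑ i ∈ s, u i j) (∑ i ∈ s, x i) := by
  classical
  induction s using Finset.induction_on with
  | empty => simpa using RLim.const hN 0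
  | insert a s ha ih =>
    simp only [Finset.sum_insert ha]
    exact RLim.add hN (hu a (Finset.mem_insert_self _ _))
      (ih fun i hi => hu i (Finset.mem_insert_of_mem hi))

lemma RLim.unique (hN : IsRankFunction NQ) {u : ℕ → Q} {x y : Q} (hx : RLim NQ u x)
    (hy : RLim NQ u y) : x = y := by
  have h : Filter.Tendsto (fun j => NQ (u j - x) + NQ (u j - y)) Filter.atTop (nhds 0) := by
    simpa using Filter.Tendsto.add hx hy
  have h2 : NQ (x - y) ≤ 0 := by
    refine ge_of_tendsto' h fun j => ?_
    have := hN.1.tri x (u j) y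
    rwa [hN.1.sub_comm x (u j)] at this
  have := hN.2 _ (le_antisymm h2 (hN.1.nonneg _))
  exact sub_eq_zero.mp this

/-- geometric sequences converge -/
lemma exists_rlim (hN : IsPseudoRankFunction NQ) (hc : RankComplete NQ) (u : ℕ → Q) (j₀ : ℕ)
    (C : ℝ) (h : ∀ j, j₀ ≤ j → NQ (u j - u (j + 1)) ≤ C * (1 / 2) ^ j) :
    ∃ x, RLim NQ u x ∧ ∀ j, j₀ ≤ j → NQ (u j - x) ≤ 2 * C * (1 / 2) ^ j := by
  have hC : 0 ≤ C := by
    have h1 := (hN.nonneg _).trans (h j₀ le_rfl)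
    by_contra hneg
    push Not at hneg
    have : C * (1 / 2 : ℝ) ^ j₀ < 0 := mul_neg_of_neg_of_pos hneg (by positivity)
    linarith
  have h2 : ∀ j, j₀ ≤ j → ∀ i, NQ (u j - u (j + i)) ≤ 2 * C * ((1 / 2) ^ j - (1 / 2) ^ (j + i)) := by
    intro j hj i
    induction i with
    | zero => simp [hN.map_zero]
    | succ i ih =>
      have a1 := hN.tri (u j) (u (j + i)) (u (j + i + 1))
      have a2 := h (j + i) (by omega)
      rw [← add_assoc]
      have a3 : (1 / 2 : ℝ) ^ (j + i + 1) = (1 / 2) ^ (j + i) / 2 := by rw [pow_succ]; ring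
      rw [a3]
      nlinarith
  have h3 : ∀ j, j₀ ≤ j → ∀ i, j ≤ i → NQ (u j - u i) ≤ 2 * C * (1 / 2) ^ j := by
    intro j hj i hi
    obtain ⟨i, rfl⟩ := Nat.exists_eq_add_of_le hi
    refine (h2 j hj i).trans ?_
    have : (0 : ℝ) < (1 / 2) ^ (j + i) := by positivity
    nlinarith
  have hlim : Filter.Tendsto (fun j : ℕ => 2 * C * (1 / 2 : ℝ) ^ j) Filter.atTop (nhds 0) := by
    have := (tendsto_pow_atTop_nhds_zero_of_lt_one (r := (1 / 2 : ℝ)) (by norm_num)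
      (by norm_num)).const_mul (2 * C)
    simpa using this
  obtain ⟨x, hx⟩ := hc u (by
    intro ε hε
    obtain ⟨n₀, hn₀⟩ := (Filter.eventually_atTop.mp (hlim.eventually (gt_mem_nhds hε)))
    refine ⟨max n₀ j₀, fun m n hm hn => ?_⟩
    rcases le_total m n with hmn | hmn
    · exact lt_of_le_of_lt (h3 m (le_trans (le_max_right _ _) hm) n hmn)
        (hn₀ m (le_trans (le_max_left _ _) hm))
    · rw [hN.sub_comm]
      exact lt_of_le_of_lt (h3 n (le_trans (le_max_right _ _) hn) m hmn)
        (hn₀ n (le_trans (le_max_left _ _) hn)))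
  refine ⟨x, ?_, ?_⟩
  · rw [RLim, Metric.tendsto_atTop]
    intro ε hε
    obtain ⟨n₀, hn₀⟩ := hx ε hε
    refine ⟨n₀, fun n hn => ?_⟩
    rw [Real.dist_eq, sub_zero, abs_of_nonneg (hN.nonneg _)]
    exact hn₀ n hn
  · intro j hj
    apply le_of_forall_pos_le_add
    intro ε hε
    obtain ⟨n₀, hn₀⟩ := hx ε hε
    have a1 := hn₀ (max n₀ j) (le_max_left _ _)
    have a2 := h3 j hj (max n₀ j) (le_max_right _ _)
    have a3 := hN.tri (u j) (u (max n₀ j)) x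
    linarith

end RLim

/-! ### Matrix rings from matrix units -/

section matHom
variable {D Q : Type} [DivisionRing D] [Ring Q]

/-- The homomorphism from a matrix ring given by matrix units. -/
def matHom {M : ℕ} (β : D →+* Q) (G : Fin M → Fin M → Q)
    (hG : ∀ s t t' u, G s t * G t' u = if t = t' then G s u else 0)
    (h1 : ∑ s, G s s = 1) (hc : ∀ d s t, β d * G s t = G s t * β d) :
    Matrix (Fin M) (Fin M) D →+* Q where
  toFun X := ∑ s, ∑ t, β (X s t) * G s t
  map_one' := by
    rw [← h1]
    apply Finset.sum_congr rfl
    intro s _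
    rw [Finset.sum_eq_single s]
    · simp
    · intro t _ hts
      simp [Matrix.one_apply_ne hts.symm]
    · simp
  map_zero' := by simp
  map_add' X Y := by simp [add_mul, Finset.sum_add_distrib]
  map_mul' X Y := by
    rw [Finset.sum_mul]
    apply Finset.sum_congr rfl
    intro s _
    have key : ∀ t t' u, β (X s t) * G s t * (β (Y t' u) * G t' u)
        = if t = t' then β (X s t * Y t' u) * G s u else 0 := by
      intro t t' u
      have : β (X s t) * G s t * (β (Y t' u) * G t' u)
          = β (X s t) * β (Y t' u) * (G s t * G t' u) := by
        rw [mul_assoc, ← mul_assoc (G s t), ← hc]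
        simp only [mul_assoc]
      rw [this, hG, ← map_mul]
      split_ifs <;> simp
    simp only [Finset.sum_mul, Finset.mul_sum, key, Matrix.mul_apply, map_sum]
    rw [Finset.sum_comm]
    conv_rhs => rw [Finset.sum_comm]
    simp
    exact Finset.sum_comm

lemma matHom_apply {M : ℕ} (β : D →+* Q) (G : Fin M → Fin M → Q) (hG h1 hc)
    (X : Matrix (Fin M) (Fin M) D) :
    matHom β G hG h1 hc X = ∑ s, ∑ t, β (X s t) * G s t := rfl

lemma matHom_inj {M : ℕ} [Nontrivial Q] (β : D →+* Q) (G : Fin M → Fin M → Q) (hG h1 hc) :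
    Function.Injective (matHom β G hG h1 hc) := by
  rw [injective_iff_map_eq_zero]
  intro X hX
  ext s t
  apply β.injective
  rw [Matrix.zero_apply, map_zero]
  have h2 : ∀ u, G u s * matHom β G hG h1 hc X * G t u = β (X s t) * G u u := by
    intro u
    rw [matHom_apply, Finset.mul_sum, Finset.sum_mul, Finset.sum_eq_single s]
    · rw [Finset.mul_sum, Finset.sum_mul, Finset.sum_eq_single t]
      · rw [← mul_assoc, ← hc, mul_assoc (β _), hG, if_pos rfl, mul_assoc, hG, if_pos rfl]
      · intro t' _ ht'
        rw [← mul_assoc, ← hc, mul_assoc (β _), hG, if_pos rfl, mul_assoc, hG, if_neg ht', mul_zero]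
      · simp
    · intro s' _ hs'
      rw [Finset.mul_sum, Finset.sum_mul]
      apply Finset.sum_eq_zero
      intro t' _
      rw [← mul_assoc, ← hc, mul_assoc (β _), hG, if_neg hs'.symm]
      simp
    · simp
  have h3 : ∑ u, G u s * matHom β G hG h1 hc X * G t u = β (X s t) := by
    simp only [h2]
    rw [← Finset.mul_sum, h1, mul_one]
  rw [← h3, hX]
  simp

lemma matHom_scalar {M : ℕ} (β : D →+* Q) (G : Fin M → Fin M → Q) (hG h1 hc) (d : D) :
    matHom β G hG h1 hc (d • (1 : Matrix (Fin M) (Fin M) D)) = β d := by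
  rw [matHom_apply]
  have : ∀ s, ∑ t, β ((d • (1 : Matrix (Fin M) (Fin M) D)) s t) * G s t = β d * G s s := by
    intro s
    rw [Finset.sum_eq_single s]
    · simp
    · intro t _ hts
      simp [Matrix.one_apply_ne hts.symm]
    · simp
  simp only [this]
  rw [← Finset.mul_sum, h1, mul_one]

end matHom

/-! ### The final construction -/

namespace Tow
variable {D A : Type} [DivisionRing D] [Ring A] {ι : D →+* A} {T : Tow D A ι} {N : A → ℝ}

lemma num_aux {κ k j : ℕ} (h1 : κ ≤ k) (h2 : j ≤ k) :
    (2 : ℝ) ^ (k - κ) * (3 * (1 / 8) ^ k) ≤ 3 * (1 / 4) ^ κ * (1 / 2) ^ j := by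
  obtain ⟨i, rfl⟩ := Nat.exists_eq_add_of_le h1
  rw [Nat.add_sub_cancel_left]
  have e1 : (2 : ℝ) ^ i * (3 * (1 / 8) ^ (κ + i)) = 3 * (1 / 8) ^ κ * (1 / 4) ^ i := by
    rw [pow_add]
    have : (1 / 4 : ℝ) ^ i = 2 ^ i * (1 / 8) ^ i := by rw [← mul_pow]; norm_num
    rw [this]; ring
  have e2 : (1 / 8 : ℝ) ^ κ = (1 / 4) ^ κ * (1 / 2) ^ κ := by rw [← mul_pow]; norm_num
  have e3 : (1 / 4 : ℝ) ^ i ≤ (1 / 2) ^ i := pow_le_pow_left₀ (by norm_num) (by norm_num) _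
  have e4 : (1 / 2 : ℝ) ^ (κ + i) ≤ (1 / 2) ^ j :=
    pow_le_pow_of_le_one (by norm_num) (by norm_num) h2
  rw [pow_add] at e4
  rw [e1, e2]
  calc 3 * ((1 / 4 : ℝ) ^ κ * (1 / 2) ^ κ) * (1 / 4) ^ i
      ≤ 3 * ((1 / 4 : ℝ) ^ κ * (1 / 2) ^ κ) * (1 / 2) ^ i := by gcongr
    _ = 3 * (1 / 4) ^ κ * ((1 / 2) ^ κ * (1 / 2) ^ i) := by ring
    _ ≤ _ := by gcongr

theorem final (hN : IsPseudoRankFunction N) (U : ℕ → T.Stg N)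
    (hU : ∀ j, (U j).Rel (U (j + 1)))
    {Q : Type} [Ring Q] [Nontrivial Q] {NQ : Q → ℝ} (φ : A →+* Q)
    (hNQ : IsRankFunction NQ) (hcomplete : RankComplete NQ)
    (hrank_eq : ∀ a : A, NQ (φ a) = N a) (hdense : RankDense NQ (Set.range φ)) :
    IsMD D Q (φ.comp ι) NQ := by
  have hkmono : StrictMono fun j => (U j).k := strictMono_nat_of_lt_succ fun j => (hU j).k_lt
  have hnmono : StrictMono fun j => (U j).n := strictMono_nat_of_lt_succ fun j => (hU j).n_lt
  have hkj : ∀ j, j ≤ (U j).k := fun j => hkmono.le_apply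
  have hnj : ∀ j, j ≤ (U j).n := fun j => hnmono.le_apply
  let c : ℕ → ℕ → ℕ → ℕ → Q := fun κ s t j => φ (coarse κ (U j).k (U j).E s t)
  have hc : ∀ κ s t, s < 2 ^ κ → t < 2 ^ κ → ∀ j, κ ≤ (U j).k →
      NQ (c κ s t j - c κ s t (j + 1)) ≤ 3 * (1 / 4) ^ κ * (1 / 2) ^ j := by
    intro κ s t hs ht j hj
    simp only [c]
    rw [← map_sub, hrank_eq, ← coarse_comp hj (hU j).k_lt.le, coarse_sub]
    exact (coarse_norm hN hj _ _ (hU j).close s t hs ht).trans (num_aux hj (hkj j))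
  have hex : ∀ κ s t, ∃ x, (s < 2 ^ κ → t < 2 ^ κ → RLim NQ (c κ s t) x ∧
      ∀ j, κ ≤ (U j).k → NQ (c κ s t j - x) ≤ 2 * (3 * (1 / 4) ^ κ) * (1 / 2) ^ j) := by
    intro κ s t
    by_cases hst : s < 2 ^ κ ∧ t < 2 ^ κ
    · obtain ⟨hs, ht⟩ := hst
      have hfind : ∃ j, κ ≤ (U j).k := ⟨κ, hkj κ⟩
      classical
      obtain ⟨x, hx1, hx2⟩ := exists_rlim hNQ.1 hcomplete (c κ s t) (Nat.find hfind)
        (3 * (1 / 4) ^ κ) (fun j hj => hc κ s t hs ht j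
          ((Nat.find_spec hfind).trans (hkmono.monotone hj)))
      exact ⟨x, fun _ _ => ⟨hx1, fun j hj => hx2 j (Nat.find_min' hfind hj)⟩⟩
    · exact ⟨0, fun hs ht => absurd ⟨hs, ht⟩ hst⟩
  choose G hG using hex
  have hlim : ∀ κ s t, s < 2 ^ κ → t < 2 ^ κ → RLim NQ (c κ s t) (G κ s t) :=
    fun κ s t hs ht => (hG κ s t hs ht).1
  have hev : ∀ κ, ∀ᶠ j in Filter.atTop, κ ≤ (U j).k := by
    intro κ
    filter_upwards [Filter.eventually_ge_atTop κ] with j hj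
    exact hj.trans (hkj j)
  -- matrix units
  have hGmul : ∀ κ s t t' u, s < 2 ^ κ → t < 2 ^ κ → t' < 2 ^ κ → u < 2 ^ κ →
      G κ s t * G κ t' u = if t = t' then G κ s u else 0 := by
    intro κ s t t' u hs ht ht' hu
    have h1 := RLim.mul hNQ.1 (hlim κ s t hs ht) (hlim κ t' u ht' hu)
    have h2 : RLim NQ (fun j => if t = t' then c κ s u j else 0)
        (if t = t' then G κ s u else 0) := by
      split_ifs
      · exact hlim κ s u hs hu
      · exact RLim.const hNQ.1 0
    refine RLim.unique hNQ h1 (h2.congr ?_)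
    filter_upwards [hev κ] with j hj
    simp only [c]
    rw [← map_mul, (U j).sys.coarse hj s t t' u hs ht ht' hu]
    split_ifs <;> simp
  have hGone : ∀ κ, ∑ s : Fin (2 ^ κ), G κ s s = 1 := by
    intro κ
    have h1 := RLim.sum hNQ.1 (Finset.univ : Finset (Fin (2 ^ κ)))
      (fun s _ => hlim κ s s s.2 s.2)
    refine RLim.unique hNQ h1 ?_
    refine RLim.of_le hNQ.1 (fun j => (1 / 8 : ℝ) ^ j)
      (tendsto_pow_atTop_nhds_zero_of_lt_one (by norm_num) (by norm_num)) ?_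
    filter_upwards [hev κ] with j hj
    simp only [c]
    rw [← map_sum, ← Finset.sum_range (fun s => coarse κ (U j).k (U j).E s s), coarse_trace hj,
      hNQ.1.sub_comm, ← map_one φ, ← map_sub, hrank_eq]
    exact (U j).dfct.trans (pow_le_pow_of_le_one (by norm_num) (by norm_num) (hkj j))
  have hGcomm : ∀ κ s t, s < 2 ^ κ → t < 2 ^ κ → ∀ d,
      (φ.comp ι) d * G κ s t = G κ s t * (φ.comp ι) d := by
    intro κ s t hs ht d
    have h1 := RLim.mul hNQ.1 (RLim.const hNQ.1 ((φ.comp ι) d)) (hlim κ s t hs ht)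
    have h2 := RLim.mul hNQ.1 (hlim κ s t hs ht) (RLim.const hNQ.1 ((φ.comp ι) d))
    refine RLim.unique hNQ h1 (h2.congr (Filter.Eventually.of_forall fun j => ?_))
    simp only [c, RingHom.comp_apply]
    rw [← map_mul, ← map_mul]
    congr 1
    unfold coarse
    rw [Finset.sum_mul, Finset.mul_sum]
    apply Finset.sum_congr rfl
    intro r _
    obtain ⟨x, hx⟩ := (U j).mem (s + 2 ^ κ * r) (t + 2 ^ κ * r)
    rw [← hx]
    exact (T.ψ_comm _ x d).symm
  have hGsucc : ∀ κ s t, s < 2 ^ κ → t < 2 ^ κ →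
      G κ s t = G (κ + 1) s t + G (κ + 1) (s + 2 ^ κ) (t + 2 ^ κ) := by
    intro κ s t hs ht
    have hp : 2 ^ (κ + 1) = 2 ^ κ + 2 ^ κ := by rw [pow_succ]; ring
    have h1 := RLim.add hNQ.1 (hlim (κ + 1) s t (by omega) (by omega))
      (hlim (κ + 1) (s + 2 ^ κ) (t + 2 ^ κ) (by omega) (by omega))
    refine RLim.unique hNQ (hlim κ s t hs ht) (h1.congr ?_)
    filter_upwards [hev (κ + 1)] with j hj
    simp only [c]
    rw [← map_add, ← coarse_comp (Nat.le_succ κ) hj]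
    congr 1
    conv_rhs => unfold coarse
    simp [Finset.sum_range_succ]
    rfl
  -- the homomorphisms
  let H : ∀ κ, Matrix (Fin (2 ^ κ)) (Fin (2 ^ κ)) D →+* Q := fun κ =>
    matHom (φ.comp ι) (fun s t => G κ s t)
      (fun s t t' u => by
        rw [hGmul κ s t t' u s.2 t.2 t'.2 u.2]
        simp [Fin.ext_iff])
      (hGone κ) (fun d s t => hGcomm κ s t s.2 t.2 d)
  have hHinj : ∀ κ, Function.Injective (H κ) := fun κ => matHom_inj _ _ _ _ _
  have hHd : ∀ κ d, H κ (d • 1) = (φ.comp ι) d := fun κ d => matHom_scalar _ _ _ _ _ d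
  have hHsingle : ∀ κ (s t : Fin (2 ^ κ)), G κ s t ∈ (H κ).range := by
    intro κ s t
    refine ⟨Matrix.single s t 1, ?_⟩
    simp only [H]
    rw [matHom_apply, Finset.sum_eq_single s, Finset.sum_eq_single t]
    · simp
    · intro b _ hb
      simp [Matrix.single_apply, hb.symm]
    · simp
    · intro b _ hb
      apply Finset.sum_eq_zero
      intro b' _
      simp [Matrix.single_apply, hb.symm]
    · simp
  refine ⟨hNQ, hcomplete, fun κ => (H κ).range, ?_, ?_, ?_⟩
  · rintro κ _ ⟨X, rfl⟩
    change matHom _ _ _ _ _ X ∈ _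
    rw [matHom_apply]
    refine sum_mem fun s _ => sum_mem fun t _ => mul_mem ⟨_, hHd (κ + 1) _⟩ ?_
    rw [hGsucc κ s t s.2 t.2]
    have hp : 2 ^ (κ + 1) = 2 ^ κ + 2 ^ κ := by rw [pow_succ]; ring
    refine add_mem (hHsingle (κ + 1) ⟨s, by omega⟩ ⟨t, by omega⟩)
      (hHsingle (κ + 1) ⟨s + 2 ^ κ, by omega⟩ ⟨t + 2 ^ κ, by omega⟩)
  · intro x ε hε
    obtain ⟨_, ⟨a, rfl⟩, ha⟩ := hdense x (ε / 3) (by positivity)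
    obtain ⟨m, hm⟩ := T.cover a
    have ht1 : Filter.Tendsto (fun j : ℕ => 6 * (1 / 2 : ℝ) ^ j) Filter.atTop (nhds 0) := by
      simpa using (tendsto_pow_atTop_nhds_zero_of_lt_one (r := (1 / 2 : ℝ)) (by norm_num)
        (by norm_num)).const_mul 6
    obtain ⟨j, hjm, hjε⟩ := ((Filter.eventually_ge_atTop m).and
      (ht1.eventually (gt_mem_nhds (show 0 < ε / 3 by positivity)))).exists
    obtain ⟨d, hd⟩ := (hU j).approx a (T.mono (hjm.trans (hnj j)) hm)
    set κ := (U (j + 1)).k with hκ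
    let X : Matrix (Fin (2 ^ κ)) (Fin (2 ^ κ)) D := Matrix.of fun p q => d p q
    refine ⟨H κ X, Set.mem_iUnion.mpr ⟨κ, ⟨X, rfl⟩⟩, ?_⟩
    set a' := ∑ p ∈ Finset.range (2 ^ κ), ∑ q ∈ Finset.range (2 ^ κ), ι (d p q) * (U (j + 1)).E p q
      with ha'
    have e1 : NQ (φ a - φ a') < ε / 3 := by
      rw [← map_sub, hrank_eq]
      refine lt_of_le_of_lt hd (lt_of_le_of_lt ?_ hjε)
      have b1 : (1 / 8 : ℝ) ^ (U j).k ≤ (1 / 8) ^ j :=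
        pow_le_pow_of_le_one (by norm_num) (by norm_num) (hkj j)
      have b2 : (1 / 8 : ℝ) ^ j ≤ (1 / 2) ^ j := pow_le_pow_left₀ (by norm_num) (by norm_num) _
      have b3 : (0 : ℝ) < (1 / 2) ^ j := by positivity
      linarith
    have e2 : NQ (φ a' - H κ X) < ε / 3 := by
      have hval : φ a' - H κ X = ∑ p : Fin (2 ^ κ), ∑ q : Fin (2 ^ κ),
          φ (ι (d p q)) * (c κ p q (j + 1) - G κ p q) := by
        simp only [ha', Finset.sum_range, map_sum, map_mul, H, matHom_apply,
          ← Finset.sum_sub_distrib, mul_sub, c, X, Matrix.of_apply, RingHom.comp_apply, ← hκ,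
          coarse_self]
      rw [hval]
      have hle : NQ (∑ p : Fin (2 ^ κ), ∑ q : Fin (2 ^ κ),
          φ (ι (d p q)) * (c κ p q (j + 1) - G κ p q)) ≤
          ∑ p : Fin (2 ^ κ), ∑ q : Fin (2 ^ κ), 2 * (3 * (1 / 4) ^ κ) * (1 / 2 : ℝ) ^ (j + 1) := by
        refine (hNQ.1.sum_le _ _).trans (Finset.sum_le_sum fun p _ => ?_)
        refine (hNQ.1.sum_le _ _).trans (Finset.sum_le_sum fun q _ => ?_)
        exact (hNQ.1.mul_le_right _ _).trans ((hG κ p q p.2 q.2).2 (j + 1) le_rfl)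
      refine lt_of_le_of_lt hle (lt_of_le_of_lt ?_ hjε)
      simp only [Finset.sum_const, Finset.card_univ, Fintype.card_fin, nsmul_eq_mul]
      push_cast
      have b1 : (2 : ℝ) ^ κ * 2 ^ κ * (1 / 4) ^ κ = 1 := by
        rw [← mul_pow, ← mul_pow]; norm_num
      have b2 : (2 : ℝ) ^ κ * (2 ^ κ * (2 * (3 * (1 / 4) ^ κ) * (1 / 2) ^ (j + 1)))
          = (2 ^ κ * 2 ^ κ * (1 / 4) ^ κ) * (6 * (1 / 2) ^ (j + 1)) := by ring
      rw [b2, b1, one_mul, pow_succ]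
      have b3 : (0 : ℝ) < (1 / 2) ^ j := by positivity
      linarith
    have e3 := hNQ.1.tri x (φ a) (H κ X)
    have e4 := hNQ.1.tri (φ a) (φ a') (H κ X)
    linarith
  · intro κ
    refine ⟨fun d => ⟨_, hHd κ d⟩, ?_⟩
    let e := RingEquiv.ofBijective (H κ).rangeRestrict
      ⟨fun X Y h => hHinj κ (by simpa using congrArg Subtype.val h), (H κ).rangeRestrict_surjective⟩
    refine ⟨e.symm, fun d => ?_⟩
    rw [RingEquiv.symm_apply_eq]
    apply Subtype.ext
    change (φ.comp ι) d = H κ (d • 1)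
    exact (hHd κ d).symm

end Tow

/-- **Theorem 3.2** (Ara–Claramunt). If `A` is an ultramatricial `D`-ring and `N` is an extremal
pseudo-rank function on `A` whose completion `Q` is a continuous factor, then `Q ≅ M_D` as
`D`-rings. -/
theorem statement6 (D : Type) [DivisionRing D] (A : Type) [Ring A] (ι : D →+* A)
    (hA : IsUltramatricialDRing D A ι)
    (N : A → ℝ) (hN : IsPseudoRankFunction N) (hNext : IsExtremalPseudoRankFunction N)
    (Q : Type) [Ring Q] (NQ : Q → ℝ) (φ : A →+* Q)
    (hNQ : IsRankFunction NQ) (hcomplete : RankComplete NQ)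
    (hrank_eq : ∀ a : A, NQ (φ a) = N a) (hdense : RankDense NQ (Set.range φ))
    (hfactor : IsContinuousFactor Q) :
    IsMD D Q (φ.comp ι) NQ := by
  obtain ⟨T⟩ := exists_tow hA
  have hreg : VNRegular Q := hfactor.2.1
  have hsplit : ∀ z x : A, z * z = z → z * x = x * z → N x = N (z * x) + N ((1 - z) * x) := by
    intro z x hz hzx
    have := rank_split hNQ.1 hreg (φ z) (φ x) (by rw [← map_mul, hz])
      (by rw [← map_mul, hzx, map_mul])
    rwa [← map_one φ, ← map_sub, ← map_mul, ← map_mul, hrank_eq, hrank_eq, hrank_eq] at this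
  have hAI := T.ai hN hNext hsplit
  have hgap : ∀ c : ℝ, 0 < c → ¬ ∀ a, N a = 0 ∨ c ≤ N a := by
    intro c hc hall
    refine gap_contra hNQ hfactor (c / 2) (by positivity) fun q => ?_
    by_contra hcon
    push Not at hcon
    obtain ⟨h0, h1⟩ := hcon
    have hpos : 0 < NQ q := lt_of_le_of_ne (hNQ.1.nonneg q) (Ne.symm h0)
    obtain ⟨_, ⟨a, rfl⟩, ha⟩ := hdense q (NQ q) hpos
    have h2 := hNQ.1.abs_sub_le q (φ a)
    rw [hrank_eq, abs_le] at h2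
    rcases hall a with h | h
    · rw [h] at h2
      linarith [h2.2]
    · linarith [h2.1]
  obtain ⟨U, hU⟩ := T.exists_stages hN hAI hgap
  haveI : Nontrivial Q := by
    refine ⟨⟨0, 1, fun h => ?_⟩⟩
    have h1 := hNQ.1.map_one
    rw [← h, hNQ.1.map_zero] at h1
    exact zero_ne_one h1
  exact T.final hN U hU φ hNQ hcomplete hrank_eq hdense

end AraClaramunt
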